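/- PA⁻ + IΣ₁ proves FRT^{<ω}(Σ₁): in every model M of PA⁻ + IΣ₁, for all e ≥ 1, k ≥ 1 and x in M there exists y in M such that every Σ₁-definable k-coloring of [y]^e has an M-finite homogeneous set of cardinality x. -/

import Mathlib

/- Shared development: first-order arithmetic in the language {0,1,+,·,<},
   the arithmetic hierarchy, fragments of arithmetic, and coded finite
   combinatorics inside models. -/

open FirstOrder Language

namespace ArithFC

/-- Function symbols of the language of arithmetic: 0, 1, +, ·. -/
inductive Func : ℕ → Type
  | zero : Func 0
  | one : Func 0
  | add : Func 2
  | mul : Func 2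

/-- Relation symbols of the language of arithmetic: <. -/
inductive Rel : ℕ → Type
  | lt : Rel 2

/-- The first-order language {0, 1, +, ·, <}. -/
def lang : Language :=
  { Functions := Func, Relations := Rel }

section Instances

variable (M : Type) [lang.Structure M]

instance : Zero M := ⟨Structure.funMap (L := lang) Func.zero ![]⟩
instance : One M := ⟨Structure.funMap (L := lang) Func.one ![]⟩
instance : Add M := ⟨fun x y => Structure.funMap (L := lang) Func.add ![x, y]⟩
instance : Mul M := ⟨fun x y => Structure.funMap (L := lang) Func.mul ![x, y]⟩
instance : LT M := ⟨fun x y => Structure.RelMap (L := lang) Rel.lt ![x, y]⟩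
instance : LE M := ⟨fun x y => x < y ∨ x = y⟩

end Instances

/-- The numeral `n` in a model. -/
def numM (M : Type) [lang.Structure M] : ℕ → M
  | 0 => 0
  | n + 1 => numM M n + 1

/-- `b` is nonstandard (greater than every numeral). -/
def Nonstd {M : Type} [lang.Structure M] (b : M) : Prop := ∀ n : ℕ, numM M n < b

/-- The atomic formula `t < u`. -/
def ltFm {α : Type} {n : ℕ} (t u : lang.Term (α ⊕ Fin n)) : lang.BoundedFormula α n :=
  BoundedFormula.rel (Rel.lt : lang.Relations 2) ![t, u]

/-- Δ₀ formulas: built from atomic formulas by boolean connectives and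
bounded universal quantification (this generates, up to logical equivalence,
the usual class of bounded formulas). -/
inductive IsDelta0 {α : Type} : ∀ n : ℕ, lang.BoundedFormula α n → Prop
  | falsum (n : ℕ) : IsDelta0 n BoundedFormula.falsum
  | equal (n : ℕ) (t u : lang.Term (α ⊕ Fin n)) : IsDelta0 n (BoundedFormula.equal t u)
  | rel (n l : ℕ) (R : lang.Relations l) (ts : Fin l → lang.Term (α ⊕ Fin n)) :
      IsDelta0 n (BoundedFormula.rel R ts)
  | imp (n : ℕ) {φ ψ : lang.BoundedFormula α n} :
      IsDelta0 n φ → IsDelta0 n ψ → IsDelta0 n (φ.imp ψ)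
  | bdAll (n : ℕ) (t : lang.Term (α ⊕ Fin n)) {φ : lang.BoundedFormula α (n + 1)} :
      IsDelta0 (n + 1) φ →
      IsDelta0 n
        (BoundedFormula.all ((ltFm (Term.var (Sum.inr (Fin.last n))) (t.liftAt 1 n)).imp φ))

mutual
  /-- Σ_m formulas. -/
  inductive SigmaFm {α : Type} : ℕ → ∀ n : ℕ, lang.BoundedFormula α n → Prop
    | delta0 (m n : ℕ) {φ : lang.BoundedFormula α n} : IsDelta0 n φ → SigmaFm m n φ
    | ofPi (m n : ℕ) {φ : lang.BoundedFormula α n} : PiFm m n φ → SigmaFm (m + 1) n φ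
    | ex (m n : ℕ) {φ : lang.BoundedFormula α (n + 1)} :
        SigmaFm (m + 1) (n + 1) φ → SigmaFm (m + 1) n φ.ex
  /-- Π_m formulas. -/
  inductive PiFm {α : Type} : ℕ → ∀ n : ℕ, lang.BoundedFormula α n → Prop
    | delta0 (m n : ℕ) {φ : lang.BoundedFormula α n} : IsDelta0 n φ → PiFm m n φ
    | ofSigma (m n : ℕ) {φ : lang.BoundedFormula α n} : SigmaFm m n φ → PiFm (m + 1) n φ
    | all (m n : ℕ) {φ : lang.BoundedFormula α (n + 1)} :
        PiFm (m + 1) (n + 1) φ → PiFm (m + 1) n φ.all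
end

/-- A `k`-ary relation on `M` is Σ_m-definable (with parameters from `M`). -/
def IsSigmaDef (m : ℕ) (M : Type) [lang.Structure M] {k : ℕ} (R : (Fin k → M) → Prop) : Prop :=
  ∃ (p : ℕ) (φ : lang.BoundedFormula (Fin k ⊕ Fin p) 0) (w : Fin p → M),
    SigmaFm m 0 φ ∧ ∀ v : Fin k → M, R v ↔ φ.Realize (Sum.elim v w) finZeroElim

/-- A subset of `M` is Σ_m-definable with parameters. -/
def SigmaDef1 (m : ℕ) (M : Type) [lang.Structure M] (A : Set M) : Prop :=
  IsSigmaDef m M (k := 1) fun v => v 0 ∈ A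

/-- A binary relation on `M` is Σ_m-definable with parameters. -/
def SigmaDef2 (m : ℕ) (M : Type) [lang.Structure M] (R : M → M → Prop) : Prop :=
  IsSigmaDef m M (k := 2) fun v => R (v 0) (v 1)

/-- A ternary relation on `M` is Σ_m-definable with parameters. -/
def SigmaDef3 (m : ℕ) (M : Type) [lang.Structure M] (R : M → M → M → Prop) : Prop :=
  IsSigmaDef m M (k := 3) fun v => R (v 0) (v 1) (v 2)

/-- `M` is a model of PA⁻ (the nonnegative part of a discretely ordered
commutative semiring). -/
structure PAm (M : Type) [lang.Structure M] : Prop where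
  add_assoc : ∀ x y z : M, x + y + z = x + (y + z)
  add_comm : ∀ x y : M, x + y = y + x
  mul_assoc : ∀ x y z : M, x * y * z = x * (y * z)
  mul_comm : ∀ x y : M, x * y = y * x
  ldistrib : ∀ x y z : M, x * (y + z) = x * y + x * z
  add_zero : ∀ x : M, x + 0 = x
  mul_zero : ∀ x : M, x * 0 = 0
  mul_one : ∀ x : M, x * 1 = x
  lt_trans : ∀ x y z : M, x < y → y < z → x < z
  lt_irrefl : ∀ x : M, ¬x < x
  lt_total : ∀ x y : M, x < y ∨ x = y ∨ y < x
  add_lt_add : ∀ x y z : M, x < y → x + z < y + z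
  mul_lt_mul : ∀ x y z : M, x < y → 0 < z → x * z < y * z
  sub_exists : ∀ x y : M, x < y → ∃ z, x + z = y
  zero_lt_one : (0 : M) < 1
  discrete : ∀ x : M, 0 < x → (1 : M) ≤ x
  zero_le : ∀ x : M, (0 : M) ≤ x

/-- `M` satisfies the Σ_m-induction scheme (with parameters). -/
def ISig (m : ℕ) (M : Type) [lang.Structure M] : Prop :=
  ∀ A : Set M, SigmaDef1 m M A → (0 : M) ∈ A → (∀ x, x ∈ A → x + 1 ∈ A) → ∀ x, x ∈ A

/-- `M` satisfies the Σ_m-collection (bounding) scheme (with parameters). -/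
def BSig (m : ℕ) (M : Type) [lang.Structure M] : Prop :=
  ∀ R : M → M → Prop, SigmaDef2 m M R → ∀ a : M,
    (∀ x, x < a → ∃ y, R x y) → ∃ b, ∀ x, x < a → ∃ y, y < b ∧ R x y

section Coding

variable {M : Type} [lang.Structure M]

/-- `z` is the Cantor pair `⟨x, y⟩`: `2z = (x+y)(x+y+1) + 2y`. -/
def IsPairC (z x y : M) : Prop := z + z = (x + y) * (x + y + 1) + (y + y)

/-- Gödel's β-function: `x = a mod ((i+1)·b + 1)`. -/
def BetaC (a b i x : M) : Prop :=
  x < (i + 1) * b + 1 ∧ ∃ q, a = q * ((i + 1) * b + 1) + x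

/-- The sequence coded by `s` (via a Cantor pair of β-function data) has value `x`
at place `i`. -/
def SeqAt (s i x : M) : Prop := ∃ a b, IsPairC s a b ∧ BetaC a b i x

/-- `c` codes the M-finite set `X` of cardinality `card`: `c = ⟨card, s⟩` where `s`
codes the strictly increasing enumeration of `X` of length `card`. -/
def CodesFinset (c : M) (X : Set M) (card : M) : Prop :=
  ∃ s, IsPairC c card s ∧
    (∀ i, i < card → ∃ x, x ∈ X ∧ SeqAt s i x) ∧
    (∀ i j x y, i < j → j < card → SeqAt s i x → SeqAt s j y → x < y) ∧
    (∀ x, x ∈ X ↔ ∃ i, i < card ∧ SeqAt s i x)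

/-- `X` is an M-finite (coded) set. -/
def MFinite (X : Set M) : Prop := ∃ c card : M, CodesFinset c X card

/-- `d` codes an `e`-element subset `D` of `[0, y)`, i.e. an element of `[y]^e`. -/
def CodesTupleIn (d e y : M) (D : Set M) : Prop :=
  CodesFinset d D e ∧ ∀ z ∈ D, z < y

/-- `f` codes a (finite) function defined on all of `[0, a)`. -/
def CodesFunOn (f a : M) : Prop :=
  ∀ x, x < a → (∃ y, SeqAt f x y) ∧ ∀ y y', SeqAt f x y → SeqAt f x y' → y = y'

/-- `X` is an M-coded subset of `[0, a)`. -/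
def MCodedSubset (a : M) (X : Set M) : Prop :=
  MFinite X ∧ ∀ x ∈ X, x < a

end Coding

/-- An `M`-ultrafilter on `a`: an ultrafilter of the Boolean algebra of
M-finite subsets of `[0, a)`. -/
structure MUltra (M : Type) [lang.Structure M] (a : M) where
  sets : Set (Set M)
  mem_coded : ∀ X ∈ sets, MCodedSubset a X
  univ_mem : {x : M | x < a} ∈ sets
  superset_mem : ∀ X Y : Set M, X ∈ sets → MCodedSubset a Y → X ⊆ Y → Y ∈ sets
  inter_mem : ∀ X Y : Set M, X ∈ sets → Y ∈ sets → X ∩ Y ∈ sets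
  empty_not_mem : (∅ : Set M) ∉ sets
  ultra : ∀ X : Set M, MCodedSubset a X → X ∈ sets ∨ {x : M | x < a ∧ x ∉ X} ∈ sets

section Principles

variable (M : Type) [lang.Structure M]

/-- `F` is (the graph of) a Σ_m-definable injection from `[0, y)` into `[0, x)`. -/
def SigmaInjRel (m : ℕ) (F : M → M → Prop) (y x : M) : Prop :=
  SigmaDef2 m M F ∧
    (∀ u, u < y → ∃ v, v < x ∧ F u v) ∧
    (∀ u v v', u < y → F u v → F u v' → v = v') ∧
    (∀ u u' v, u < y → u' < y → F u v → F u' v → u = u')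

/-- There exists a Σ_m-definable injection from `[0, y)` into `[0, x)`. -/
def ExSigmaInj (m : ℕ) (y x : M) : Prop := ∃ F : M → M → Prop, SigmaInjRel M m F y x

/-- There exists a Σ_m-definable injection from all of `M` into `[0, a)`. -/
def SigmaInjWhole (m : ℕ) (a : M) : Prop :=
  ∃ F : M → M → Prop, SigmaDef2 m M F ∧
    (∀ u, ∃ v, v < a ∧ F u v) ∧
    (∀ u v v', F u v → F u v' → v = v') ∧
    (∀ u u' v, F u v → F u' v → u = u')

/-- CARD(Σ_m): no Σ_m-definable multivalued map sends `M` injectively below `a`. -/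
def CARD (m : ℕ) : Prop :=
  ∀ F : M → M → Prop, SigmaDef2 m M F → ∀ a : M,
    (∀ x, ∃ y, y < a ∧ F x y) →
      ∃ x0 x1 y, x0 ≠ x1 ∧ y < a ∧ F x0 y ∧ F x1 y

/-- GPHP(Σ_m): for every `x` there is `y` with no Σ_m-definable injection of
`[0,y)` into `[0,x)`. -/
def GPHP (m : ℕ) : Prop := ∀ x : M, ∃ y : M, ¬ExSigmaInj M m y x

/-- WPHP(Σ_m): for `x > 0` there is no Σ_m-definable injection of `[0,2x)` into `[0,x)`. -/
def WPHP (m : ℕ) : Prop := ∀ x : M, 0 < x → ¬ExSigmaInj M m (x + x) x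

/-- `C` is a Σ_m-definable `k`-coloring of `[y]^e` (acting on codes of
`e`-element subsets of `[0,y)`, independently of the chosen code). -/
def IsColoring (m : ℕ) (e y k : M) (C : M → M → Prop) : Prop :=
  SigmaDef2 m M C ∧
    (∀ d D, CodesTupleIn d e y D → ∃ i, i < k ∧ C d i) ∧
    (∀ d d' D i i', CodesTupleIn d e y D → CodesTupleIn d' e y D → C d i → C d' i' → i = i')

/-- FRT^e_k(Σ_m): every Σ_m-definable `k`-coloring of some `[y]^e` has an
M-finite homogeneous set of cardinality `x`, for every `x`. -/
def FRT (m : ℕ) (e k : M) : Prop :=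
  ∀ x : M, ∃ y : M, ∀ C : M → M → Prop, IsColoring M m e y k C →
    ∃ (c : M) (H : Set M), CodesFinset c H x ∧ (∀ z ∈ H, z < y) ∧
      ∃ i, ∀ d D, CodesFinset d D e → D ⊆ H → C d i

/-- fairFRT^e_k(Σ_m): the homogeneous set is required to be given as the range of a
Σ_m-definable injection from `[0,x)` into `[0,y)`. -/
def FairFRT (m : ℕ) (e k : M) : Prop :=
  ∀ x : M, ∃ y : M, ∀ C : M → M → Prop, IsColoring M m e y k C →
    ∃ H : M → M → Prop, SigmaInjRel M m H x y ∧
      ∃ i, ∀ d D, CodesFinset d D e → (∀ z ∈ D, ∃ u, u < x ∧ H u z) → C d i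

/-- `C` is a Σ_m-definable `k`-coloring of `[0, y)`. -/
def IsColoring1 (m : ℕ) (y k : M) (C : M → M → Prop) : Prop :=
  SigmaDef2 m M C ∧
    (∀ z, z < y → ∃ i, i < k ∧ C z i) ∧
    (∀ z i i', z < y → C z i → C z i' → i = i')

/-- FRT¹_k(Σ_m): every Σ_m-definable `k`-coloring of some `[0,y)` has an M-finite
homogeneous set of cardinality `x`, for every `x`. -/
def FRT1 (m : ℕ) (k : M) : Prop :=
  ∀ x : M, ∃ y : M, ∀ C : M → M → Prop, IsColoring1 M m y k C →
    ∃ (c : M) (H : Set M), CodesFinset c H x ∧ (∀ z ∈ H, z < y) ∧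
      ∃ i, ∀ z ∈ H, C z i

/-- fairFRT¹_k(Σ_m). -/
def FairFRT1 (m : ℕ) (k : M) : Prop :=
  ∀ x : M, ∃ y : M, ∀ C : M → M → Prop, IsColoring1 M m y k C →
    ∃ H : M → M → Prop, SigmaInjRel M m H x y ∧
      ∃ i, ∀ u v, u < x → H u v → C v i

end Principles

section Approx

variable {M : Type} [lang.Structure M]

/-- `f` is (the graph of) a partial function. -/
def IsPartialFun (f : M → M → Prop) : Prop := ∀ x y y', f x y → f x y' → y = y'

/-- `s` codes an approximation to the partial function `f` of length `b`. -/
def IsApprox (f : M → M → Prop) (s b : M) : Prop :=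
  (∀ i, i < b → ∃ v, SeqAt s i v) ∧
    (∀ i u v x y, i + 1 < b → SeqAt s i u → SeqAt s (i + 1) v → x ≤ u → f x y → y ≤ v)

/-- `s` codes a `g`-stretched approximation to the partial function `f` of length `b`. -/
def IsStretchedApprox (f g : M → M → Prop) (s b : M) : Prop :=
  (∀ i, i < b → ∃ v, SeqAt s i v) ∧
    (∀ i u w v x y, i + 1 < b → SeqAt s i u → g u w → SeqAt s (i + 1) v →
      x ≤ w → f x y → y ≤ v)

/-- The eventual (limit) value of `fun s => h s ·` is `x`. -/
def EvLim (h : M → M → Prop) (x : M) : Prop := ∃ s : M, ∀ t, s < t → h t x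

end Approx

/-- PΣ_m: every partial Σ_m-definable function admits approximations of every length. -/
def PSig (m : ℕ) (M : Type) [lang.Structure M] : Prop :=
  ∀ f : M → M → Prop, SigmaDef2 m M f → IsPartialFun f → ∀ b : M, ∃ s, IsApprox f s b

section Extensions

variable (M N : Type) [lang.Structure M] [lang.Structure N]

/-- `g : M → N` is Σ_m-elementary: Σ_m formulas with parameters from `M` transfer. -/
def SigmaElem (m : ℕ) (g : M → N) : Prop :=
  ∀ (p : ℕ) (φ : lang.BoundedFormula (Fin p) 0), SigmaFm m 0 φ →
    ∀ v : Fin p → M, (φ.Realize v finZeroElim ↔ φ.Realize (g ∘ v) finZeroElim)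

/-- The extension `g : M → N` is cofinal. -/
def Cofinal (g : M → N) : Prop := ∀ z : N, ∃ x : M, z ≤ g x

/-- `[0,a]^M = [0,a]^N`: every element of `N` below `g a` comes from `M`. -/
def SameBelow (g : M → N) (a : M) : Prop := ∀ z : N, z ≤ g a → ∃ x : M, g x = z

end Extensions

section Ramsey

variable {M : Type} [lang.Structure M]

/-- `f` is an M-coded `k`-coloring of `[y]^e` (assigning colors to codes of
`e`-subsets of `[0,y)`, independently of the code). -/
def CodedColoring (f e y k : M) : Prop :=
  (∀ d D, CodesTupleIn d e y D → ∃ i, i < k ∧ SeqAt f d i) ∧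
    (∀ d d' D i i', CodesTupleIn d e y D → CodesTupleIn d' e y D →
      SeqAt f d i → SeqAt f d' i' → i = i')

/-- The coded coloring `f` of `[y]^e` has an M-coded homogeneous set of cardinality `x`. -/
def CodedHomog (f e y x : M) : Prop :=
  ∃ (c : M) (H : Set M), CodesFinset c H x ∧ (∀ z ∈ H, z < y) ∧
    ∃ i, ∀ d D, CodesFinset d D e → D ⊆ H → SeqAt f d i

/-- `y = r(x, e, k)`: `y` is the least size guaranteeing coded homogeneous sets of
cardinality `x` for all coded `k`-colorings of `e`-subsets. -/
def IsRamsey (x e k y : M) : Prop :=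
  (∀ f, CodedColoring f e y k → CodedHomog f e y x) ∧
    (∀ y', y' < y → ∃ f, CodedColoring f e y' k ∧ ¬CodedHomog f e y' x)

/-- `y = r^(b)(x, e, k)`: the `b`-th iterate of the Ramsey function inside `M`. -/
def IterRamsey (x e k b y : M) : Prop :=
  ∃ s : M, SeqAt s 0 x ∧ SeqAt s b y ∧ (∀ i, i ≤ b → ∃ u, SeqAt s i u) ∧
    (∀ i u v, i < b → SeqAt s i u → SeqAt s (i + 1) v → IsRamsey u e k v)

end Ramsey

end ArithFC

namespace ArithFC

/-!
Inside a model `M` of `PA⁻ + IΣ₁`, the Σ₁ predicates are closed under bounded quantification and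
substitution of Σ₁ functions, so Gödel's β-function codes every Σ₁-definable choice along an
initial segment. In particular a Σ₁ coloring of `[y]^e` may be replaced by a coded list of colors,
and only coded colorings need to be considered.

For these, the usual proof of Ramsey's theorem eliminates the dependence of the color on the
entries of a tuple, one at a time from the last: within any long enough sequence one thins out
greedily, at each step using the pigeonhole principle to keep only later entries that yield the
same colors over all tuples of entries chosen so far. After `e` rounds the color is constant. The
number of rounds may be nonstandard, so the claim carried through the induction must be Σ₁: all
codes of sequences in sight are bounded in advance by coded numbers, the sizes required in the
successive rounds forming a coded tower.
-/

section Models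

variable {M : Type} [lang.Structure M]

theorem PAm.zero_add (h : PAm M) (x : M) : 0 + x = x := by
  rw [h.add_comm, h.add_zero]

theorem PAm.le_refl (x : M) : x ≤ x := Or.inr rfl

theorem PAm.le_trans (h : PAm M) {x y z : M} : x ≤ y → y ≤ z → x ≤ z := by
  rintro (hxy | rfl) (hyz | rfl)
  exacts [.inl (h.lt_trans _ _ _ hxy hyz), .inl hxy, .inl hyz, .inr rfl]

theorem PAm.not_le_of_lt (h : PAm M) {x y : M} (hxy : x < y) : ¬y ≤ x := by
  rintro (hyx | rfl)
  exacts [h.lt_irrefl _ (h.lt_trans _ _ _ hxy hyx), h.lt_irrefl _ hxy]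

theorem PAm.le_or_lt (h : PAm M) (x y : M) : x ≤ y ∨ y < x := by
  rcases h.lt_total x y with hxy | hxy | hyx
  exacts [.inl (.inl hxy), .inl (.inr hxy), .inr hyx]

theorem PAm.add_le_add_right (h : PAm M) {x y : M} (hxy : x ≤ y) (z : M) : x + z ≤ y + z := by
  rcases hxy with hxy | rfl
  exacts [.inl (h.add_lt_add _ _ _ hxy), .inr rfl]

theorem PAm.le_add_left (h : PAm M) (x y : M) : x ≤ y + x := by
  simpa only [h.zero_add] using h.add_le_add_right (h.zero_le y) x

/-- `M` is a model of `PA⁻ + IΣ₁`. -/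
class Model (M : Type) [lang.Structure M] : Prop where
  pam : PAm M
  isig : ISig 1 M

noncomputable instance [Model M] : CommSemiring M where
  add_assoc := Model.pam.add_assoc
  add_comm := Model.pam.add_comm
  add_zero := Model.pam.add_zero
  zero_add := Model.pam.zero_add
  nsmul := nsmulRec
  mul_assoc := Model.pam.mul_assoc
  mul_comm := Model.pam.mul_comm
  mul_zero := Model.pam.mul_zero
  zero_mul x := by rw [Model.pam.mul_comm, Model.pam.mul_zero]
  mul_one := Model.pam.mul_one
  one_mul x := by rw [Model.pam.mul_comm, Model.pam.mul_one]
  left_distrib := Model.pam.ldistrib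
  right_distrib x y z := by
    rw [Model.pam.mul_comm, Model.pam.ldistrib, Model.pam.mul_comm z x, Model.pam.mul_comm z y]

noncomputable instance [Model M] : LinearOrder M where
  le_refl := PAm.le_refl
  le_trans _ _ _ := Model.pam.le_trans
  lt_iff_le_not_ge x y :=
    ⟨fun h => ⟨.inl h, Model.pam.not_le_of_lt h⟩,
      fun h => h.1.resolve_right fun e => h.2 (.inr e.symm)⟩
  le_antisymm x y hxy hyx := hxy.resolve_left fun h => Model.pam.not_le_of_lt h hyx
  le_total x y := (Model.pam.le_or_lt x y).imp_right .inl
  toDecidableLE := Classical.decRel _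

instance [Model M] : IsStrictOrderedRing M where
  add_le_add_left _ _ h z := Model.pam.add_le_add_right h z
  le_of_add_le_add_left z x y h := le_of_not_gt fun hyx =>
    Model.pam.not_le_of_lt (Model.pam.add_lt_add _ _ z hyx) (by rwa [add_comm x, add_comm y])
  zero_le_one := .inl Model.pam.zero_lt_one
  exists_pair_ne := ⟨0, 1, ne_of_lt Model.pam.zero_lt_one⟩
  mul_lt_mul_of_pos_left a ha b c h := by
    simpa only [mul_comm a] using Model.pam.mul_lt_mul b c a h ha
  mul_lt_mul_of_pos_right a ha b c h := Model.pam.mul_lt_mul b c a h ha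

instance [Model M] : CanonicallyOrderedAdd M where
  exists_add_of_le {x y} h := h.elim
    (fun h => (Model.pam.sub_exists x y h).imp fun _ => Eq.symm) fun h => ⟨0, h ▸ (add_zero x).symm⟩
  le_add_self x y := Model.pam.le_add_left x y
  le_self_add x y := by simpa only [add_comm x] using Model.pam.le_add_left x y

variable [Model M]

theorem lt_add_one_iff_le {x y : M} : x < y + 1 ↔ x ≤ y := by
  refine ⟨fun h => ?_, fun h => h.trans_lt (lt_add_one y)⟩
  by_contra! hc
  obtain ⟨c, rfl⟩ := exists_add_of_le hc.le
  have hc0 : 0 < c := by simpa using hc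
  exact (Model.pam.discrete c hc0).not_gt (by simpa using h)

end Models

section Contexts

/-- A space `Γ` of assignments of elements of `M` to the variables in `Index Γ`. -/
class Context (M : outParam Type) (Γ : Type) where
  Index : Type
  coord : Index → Γ → M

open Context

variable {M : Type} [lang.Structure M]

instance : Context M M := ⟨Unit, fun _ => id⟩

instance {ι : Type} : Context M (ι → M) := ⟨ι, fun i v => v i⟩

instance {Γ Δ : Type} [Context M Γ] [Context M Δ] : Context M (Γ × Δ) :=
  ⟨Index Γ ⊕ Index Δ, Sum.elim (fun i p => coord i p.1) fun i p => coord i p.2⟩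

variable {Γ Δ Θ : Type} [Context M Γ] [Context M Δ] [Context M Θ]

/-- The functions on a context given by terms with parameters from `M`. -/
inductive IsTerm : (Γ → M) → Prop
  | coord (i : Index Γ) : IsTerm (coord i)
  | const (c : M) : IsTerm fun _ => c
  | add {s t : Γ → M} : IsTerm s → IsTerm t → IsTerm fun γ => s γ + t γ
  | mul {s t : Γ → M} : IsTerm s → IsTerm t → IsTerm fun γ => s γ * t γ

/-- The predicates on contexts given by Δ₀ formulas with parameters from `M`. -/
inductive Delta0 : ∀ {Γ : Type} [Context M Γ], (Γ → Prop) → Prop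
  | falsum {Γ : Type} [Context M Γ] : Delta0 fun _ : Γ => False
  | eq {Γ : Type} [Context M Γ] {s t : Γ → M} : IsTerm s → IsTerm t → Delta0 fun γ => s γ = t γ
  | lt {Γ : Type} [Context M Γ] {s t : Γ → M} : IsTerm s → IsTerm t → Delta0 fun γ => s γ < t γ
  | imp {Γ : Type} [Context M Γ] {P Q : Γ → Prop} :
      Delta0 P → Delta0 Q → Delta0 fun γ => P γ → Q γ
  | ball {Γ : Type} [Context M Γ] {t : Γ → M} {P : Γ × M → Prop} :
      IsTerm t → Delta0 P → Delta0 fun γ => ∀ z, z < t γ → P (γ, z)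

/-- A map of contexts all of whose coordinates are terms, that is, a substitution. -/
class TermMap (r : Γ → Δ) : Prop where
  isTerm_coord : ∀ i, IsTerm fun γ => coord i (r γ)

theorem IsTerm.comp {t : Δ → M} (ht : IsTerm t) (r : Γ → Δ) [TermMap r] :
    IsTerm fun γ => t (r γ) := by
  induction ht with
  | coord i => exact TermMap.isTerm_coord i
  | const c => exact .const c
  | add _ _ hs ht => exact hs.add ht
  | mul _ _ hs ht => exact hs.mul ht

-- Low priority, since up to η this applies to every map into a product.
instance (priority := low) TermMap.prodMk (r : Γ → Δ) (s : Γ → Θ) [TermMap r] [TermMap s] :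
    TermMap fun γ => (r γ, s γ) :=
  ⟨Sum.rec TermMap.isTerm_coord TermMap.isTerm_coord⟩

instance TermMap.const (δ : Δ) : TermMap fun _ : Γ => δ := ⟨fun _ => .const _⟩

instance TermMap.fst (r : Γ → Δ × Θ) [h : TermMap r] : TermMap fun γ => (r γ).1 :=
  ⟨fun i => h.isTerm_coord (.inl i)⟩

instance TermMap.snd (r : Γ → Δ × Θ) [h : TermMap r] : TermMap fun γ => (r γ).2 :=
  ⟨fun i => h.isTerm_coord (.inr i)⟩

instance TermMap.id : TermMap fun γ : Γ => γ := ⟨.coord⟩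

theorem TermMap.prodMap_id (r : Γ → Δ) [TermMap r] : TermMap fun p : Γ × Θ => (r p.1, p.2) :=
  ⟨Sum.rec (fun i => (isTerm_coord (r := r) i).comp Prod.fst)
    fun i => (IsTerm.coord i).comp Prod.snd⟩

theorem TermMap.isTerm (t : Γ → M) [h : TermMap t] : IsTerm t := h.isTerm_coord ()

namespace Delta0

theorem comp {P : Δ → Prop} (hP : Delta0 P) (r : Γ → Δ) [TermMap r] : Delta0 fun γ => P (r γ) := by
  induction hP generalizing Γ with
  | falsum => exact .falsum
  | eq hs ht => exact .eq (hs.comp r) (ht.comp r)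
  | lt hs ht => exact .lt (hs.comp r) (ht.comp r)
  | imp _ _ hP hQ => exact .imp (hP r) (hQ r)
  | ball ht _ hP =>
    have := TermMap.prodMap_id (Θ := M) r
    exact .ball (ht.comp r) (hP fun p : Γ × M => (r p.1, p.2))

variable {P Q : Γ → Prop}

theorem congr (hP : Delta0 P) (h : ∀ γ, Q γ ↔ P γ) : Delta0 Q := by
  rwa [show Q = P from funext fun γ => propext (h γ)]

theorem not (hP : Delta0 P) : Delta0 fun γ => ¬P γ := hP.imp .falsum

theorem and (hP : Delta0 P) (hQ : Delta0 Q) : Delta0 fun γ => P γ ∧ Q γ :=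
  (hP.imp hQ.not).not.congr fun γ => by tauto

theorem or (hP : Delta0 P) (hQ : Delta0 Q) : Delta0 fun γ => P γ ∨ Q γ :=
  (hP.not.imp hQ).congr fun γ => by tauto

theorem forall_lt {t : Γ → M} [TermMap t] {P : Γ → M → Prop}
    (hP : Delta0 fun p : Γ × M => P p.1 p.2) : Delta0 fun γ => ∀ z, z < t γ → P γ z :=
  .ball (P := fun p => P p.1 p.2) (TermMap.isTerm t) hP

theorem exists_lt {t : Γ → M} [TermMap t] {P : Γ → M → Prop}
    (hP : Delta0 fun p : Γ × M => P p.1 p.2) : Delta0 fun γ => ∃ z, z < t γ ∧ P γ z :=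
  (forall_lt (P := fun γ z => ¬P γ z) hP.not).not.congr fun γ => by push Not; rfl

end Delta0

/-- The predicates on contexts given by Σ₁ formulas with parameters from `M`. -/
class Sigma1 (P : Γ → Prop) : Prop where
  exists_delta0 : ∃ Q : Γ × M → Prop, Delta0 Q ∧ ∀ γ, P γ ↔ ∃ z, Q (γ, z)

theorem Delta0.sigma1 {P : Γ → Prop} (hP : Delta0 P) : Sigma1 P :=
  ⟨fun p => P p.1, hP.comp _, fun γ => by simp⟩

namespace Sigma1

theorem congr {P Q : Γ → Prop} (hP : Sigma1 P) (h : ∀ γ, Q γ ↔ P γ) : Sigma1 Q := by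
  rwa [show Q = P from funext fun γ => propext (h γ)]

theorem comp_termMap {P : Δ → Prop} (hP : Sigma1 P) (r : Γ → Δ) [TermMap r] :
    Sigma1 fun γ => P (r γ) := by
  obtain ⟨Q, hQ, hPQ⟩ := hP
  have := TermMap.prodMap_id (Θ := M) r
  exact ⟨_, hQ.comp fun p : Γ × M => (r p.1, p.2), fun γ => hPQ (r γ)⟩

variable [Model M]

instance ex {P : Γ → M → Prop} [hP : Sigma1 fun p : Γ × M => P p.1 p.2] :
    Sigma1 fun γ => ∃ z, P γ z := by
  obtain ⟨Q, hQ, hPQ⟩ := hP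
  refine ⟨fun p => ∃ z, z < p.2 ∧ ∃ w, w < p.2 ∧ Q ((p.1, z), w),
    .exists_lt (.exists_lt (hQ.comp fun p : ((Γ × M) × M) × M => ((p.1.1.1, p.1.2), p.2))),
    fun γ => ⟨?_, ?_⟩⟩
  · rintro ⟨z, hz⟩
    obtain ⟨w, hw⟩ := (hPQ (γ, z)).1 hz
    exact ⟨max z w + 1, z, lt_add_one_iff_le.2 (le_max_left _ _), w,
      lt_add_one_iff_le.2 (le_max_right _ _), hw⟩
  · rintro ⟨b, z, -, w, -, h⟩
    exact ⟨z, (hPQ (γ, z)).2 ⟨w, h⟩⟩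

variable {P Q : Γ → Prop}

instance and [hP : Sigma1 P] [hQ : Sigma1 Q] : Sigma1 fun γ => P γ ∧ Q γ := by
  obtain ⟨P', hP', hPP'⟩ := hP
  obtain ⟨Q', hQ', hQQ'⟩ := hQ
  have : Sigma1 fun γ => ∃ z, ∃ w, P' (γ, z) ∧ Q' (γ, w) :=
    ex (hP := ex (hP := Delta0.sigma1 <| .and (hP'.comp fun p : (Γ × M) × M => (p.1.1, p.1.2))
      (hQ'.comp fun p : (Γ × M) × M => (p.1.1, p.2))))
  exact this.congr fun γ => by simp only [hPP', hQQ', exists_and_left, exists_and_right]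

instance or [hP : Sigma1 P] [hQ : Sigma1 Q] : Sigma1 fun γ => P γ ∨ Q γ := by
  obtain ⟨P', hP', hPP'⟩ := hP
  obtain ⟨Q', hQ', hQQ'⟩ := hQ
  exact ⟨_, hP'.or hQ', fun γ => by rw [hPP', hQQ', exists_or]⟩

end Sigma1

end Contexts

section Formulas

open Context Filter

/-- An enumeration of a finite set of parameters. -/
noncomputable def params {M : Type} (L : Finset M) (j : Fin L.card) : M := L.equivFin.symm j

theorem exists_params_eq {M : Type} {L : Finset M} {c : M} (hc : c ∈ L) : ∃ j, params L j = c :=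
  ⟨L.equivFin ⟨c, hc⟩, by simp [params]⟩

variable {M : Type} [lang.Structure M] {Γ : Type} [Context M Γ] {α β : Type} {n : ℕ}

theorem funMap_zero (xs : Fin 0 → M) : Structure.funMap (L := lang) Func.zero xs = 0 :=
  congrArg _ (Subsingleton.elim _ _)

theorem funMap_one (xs : Fin 0 → M) : Structure.funMap (L := lang) Func.one xs = 1 :=
  congrArg _ (Subsingleton.elim _ _)

theorem funMap_add (xs : Fin 2 → M) :
    Structure.funMap (L := lang) Func.add xs = xs 0 + xs 1 :=
  congrArg _ (FinVec.etaExpand_eq xs).symm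

theorem funMap_mul (xs : Fin 2 → M) :
    Structure.funMap (L := lang) Func.mul xs = xs 0 * xs 1 :=
  congrArg _ (FinVec.etaExpand_eq xs).symm

theorem relMap_lt (xs : Fin 2 → M) : Structure.RelMap (L := lang) Rel.lt xs ↔ xs 0 < xs 1 :=
  iff_of_eq (congrArg _ (FinVec.etaExpand_eq xs).symm)

theorem realize_ltFm (t u : lang.Term (α ⊕ Fin n)) (v : α → M) (xs : Fin n → M) :
    (ltFm t u).Realize v xs ↔ t.realize (Sum.elim v xs) < u.realize (Sum.elim v xs) :=
  relMap_lt _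

theorem realize_liftAt_snoc (t : lang.Term (α ⊕ Fin n)) (v : α → M) (xs : Fin n → M) (z : M) :
    (t.liftAt 1 n).realize (Sum.elim v (Fin.snoc xs z)) = t.realize (Sum.elim v xs) := by
  rw [Term.realize_liftAt]
  congr 1
  ext (a | i)
  · rfl
  · simp only [Function.comp_apply, Sum.map_inr, Fin.is_lt, if_true, Sum.elim_inr]
    exact Fin.snoc_castSucc (α := fun _ => M) z xs i

theorem realize_bdAll (t : lang.Term (α ⊕ Fin n)) (φ : lang.BoundedFormula α (n + 1))
    (v : α → M) (xs : Fin n → M) :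
    (((ltFm (Term.var (Sum.inr (Fin.last n))) (t.liftAt 1 n)).imp φ).all).Realize v xs ↔
      ∀ z, z < t.realize (Sum.elim v xs) → φ.Realize v (Fin.snoc (α := fun _ => M) xs z) := by
  simp only [BoundedFormula.realize_all, BoundedFormula.realize_imp, realize_ltFm,
    realize_liftAt_snoc, Term.realize_var, Sum.elim_inr, Fin.snoc_last]

theorem isTerm_realize (t : lang.Term α) : IsTerm fun v : α → M => t.realize v := by
  induction t with
  | var a => exact .coord (Γ := α → M) a
  | func f ts ih =>
    simp only [Term.realize_func]
    cases f with
    | zero => simpa only [funMap_zero] using .const 0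
    | one => simpa only [funMap_one] using .const 1
    | add => simpa only [funMap_add] using (ih 0).add (ih 1)
    | mul => simpa only [funMap_mul] using (ih 0).mul (ih 1)

instance TermMap.sumElim (r : Γ → α → M) (s : Γ → β → M) [hr : TermMap r] [hs : TermMap s] :
    TermMap fun γ => Sum.elim (r γ) (s γ) :=
  ⟨Sum.rec hr.isTerm_coord hs.isTerm_coord⟩

instance TermMap.finSnoc (r : Γ → Fin n → M) (t : Γ → M) [hr : TermMap r] [TermMap t] :
    TermMap fun γ => (Fin.snoc (r γ) (t γ) : Fin (n + 1) → M) :=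
  ⟨Fin.lastCases (by simpa [coord] using TermMap.isTerm t)
    fun i => by simpa [coord] using hr.isTerm_coord i⟩

theorem IsDelta0.delta0_realize {φ : lang.BoundedFormula α n} (hφ : IsDelta0 n φ) :
    Delta0 fun p : (α → M) × (Fin n → M) => φ.Realize p.1 p.2 := by
  induction hφ with
  | falsum n => exact .falsum
  | equal n t u => exact .eq ((isTerm_realize t).comp _) ((isTerm_realize u).comp _)
  | rel n l R ts =>
    cases R
    exact (Delta0.lt ((isTerm_realize (ts 0)).comp _) ((isTerm_realize (ts 1)).comp _)).congr
      fun p => relMap_lt _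
  | imp n _ _ hφ hψ => exact hφ.imp hψ
  | bdAll n t _ hφ =>
    exact (Delta0.ball ((isTerm_realize t).comp _) (hφ.comp fun p : ((α → M) × (Fin n → M)) × M =>
      (p.1.1, (Fin.snoc p.1.2 p.2 : Fin (n + 1) → M)))).congr fun p => realize_bdAll t _ p.1 p.2

theorem SigmaFm.sigma1_realize [Model M] {φ : lang.BoundedFormula α n} (hφ : SigmaFm 1 n φ) :
    Sigma1 fun p : (α → M) × (Fin n → M) => φ.Realize p.1 p.2 := by
  refine SigmaFm.rec
    (motive_1 := fun m n φ _ => m = 1 → Sigma1 fun p : (α → M) × (Fin n → M) => φ.Realize p.1 p.2)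
    (motive_2 := fun m n φ _ => m = 0 → IsDelta0 n φ)
    (fun m n φ h _ => h.delta0_realize.sigma1)
    (fun m n φ _ h hm => (h (by simpa using hm)).delta0_realize.sigma1)
    (fun m n φ _ h hm => ?_) (fun m n φ h _ => h)
    (fun m n φ _ _ hm => (m.succ_ne_zero hm).elim)
    (fun m n φ _ _ hm => (m.succ_ne_zero hm).elim) hφ rfl
  exact (Sigma1.ex (hP := (h hm).comp_termMap fun p : ((α → M) × (Fin n → M)) × M =>
    (p.1.1, (Fin.snoc p.1.2 p.2 : Fin (n + 1) → M)))).congr fun p => BoundedFormula.realize_ex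

theorem IsTerm.eventually_exists_term {t : Γ → M} (ht : IsTerm t) :
    ∀ᶠ L : Finset M in atTop, ∀ {n : ℕ} (ι : Index Γ → α ⊕ Fin n),
      ∃ T : lang.Term ((α ⊕ Fin L.card) ⊕ Fin n), ∀ u v γ,
        (∀ i, Context.coord i γ = Sum.elim u v (ι i)) →
          T.realize (Sum.elim (Sum.elim u (params L)) v) = t γ := by
  induction ht with
  | coord i =>
    refine .of_forall fun L n ι => ?_
    refine ⟨Term.var ((ι i).map .inl id), fun u v γ h => ?_⟩
    rw [h]
    cases ι i <;> rfl
  | const c =>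
    filter_upwards [eventually_ge_atTop {c}] with L hL n ι
    obtain ⟨j, hj⟩ := exists_params_eq (hL (Finset.mem_singleton_self c))
    exact ⟨Term.var (.inl (.inr j)), fun _ _ _ _ => hj⟩
  | add _ _ hs ht =>
    filter_upwards [hs, ht] with L hs ht n ι
    obtain ⟨S, hS⟩ := hs ι
    obtain ⟨T, hT⟩ := ht ι
    exact ⟨Term.func (L := lang) Func.add ![S, T], fun u v γ h =>
      (funMap_add _).trans (congrArg₂ _ (hS u v γ h) (hT u v γ h))⟩
  | mul _ _ hs ht =>
    filter_upwards [hs, ht] with L hs ht n ι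
    obtain ⟨S, hS⟩ := hs ι
    obtain ⟨T, hT⟩ := ht ι
    exact ⟨Term.func (L := lang) Func.mul ![S, T], fun u v γ h =>
      (funMap_mul _).trans (congrArg₂ _ (hS u v γ h) (hT u v γ h))⟩

theorem Delta0.eventually_exists_formula {P : Γ → Prop} (hP : Delta0 P) :
    ∀ᶠ L : Finset M in atTop, ∀ {n : ℕ} (ι : Index Γ → α ⊕ Fin n),
      ∃ φ : lang.BoundedFormula (α ⊕ Fin L.card) n, IsDelta0 n φ ∧ ∀ u v γ,
        (∀ i, coord i γ = Sum.elim u v (ι i)) → (φ.Realize (Sum.elim u (params L)) v ↔ P γ) := by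
  induction hP with
  | falsum => exact .of_forall fun L n ι => ⟨_, .falsum n, fun _ _ _ _ => Iff.rfl⟩
  | eq hs ht =>
    filter_upwards [hs.eventually_exists_term, ht.eventually_exists_term] with L hs ht n ι
    obtain ⟨S, hS⟩ := hs ι
    obtain ⟨T, hT⟩ := ht ι
    exact ⟨_, .equal n S T, fun u v γ h => by
      simp only [BoundedFormula.Realize, hS u v γ h, hT u v γ h]⟩
  | lt hs ht =>
    filter_upwards [hs.eventually_exists_term, ht.eventually_exists_term] with L hs ht n ι
    obtain ⟨S, hS⟩ := hs ι
    obtain ⟨T, hT⟩ := ht ι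
    exact ⟨ltFm S T, .rel n 2 _ _, fun u v γ h => by rw [realize_ltFm, hS u v γ h, hT u v γ h]⟩
  | imp _ _ hP hQ =>
    filter_upwards [hP, hQ] with L hP hQ n ι
    obtain ⟨φ, hφ, hφP⟩ := hP ι
    obtain ⟨ψ, hψ, hψQ⟩ := hQ ι
    exact ⟨_, .imp n hφ hψ, fun u v γ h => by
      rw [BoundedFormula.realize_imp, hφP u v γ h, hψQ u v γ h]⟩
  | ball ht _ hP =>
    filter_upwards [ht.eventually_exists_term, hP] with L ht hP n ι
    obtain ⟨T, hT⟩ := ht ι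
    obtain ⟨φ, hφ, hφP⟩ := hP (Sum.elim (fun i => (ι i).map id Fin.castSucc)
      fun _ => .inr (Fin.last n))
    refine ⟨_, .bdAll n T hφ, fun u v γ h => ?_⟩
    rw [realize_bdAll, hT u v γ h]
    refine forall_congr' fun z => imp_congr_right fun _ => hφP u _ (γ, z) ?_
    rintro (i | _)
    · refine (h i).trans ?_
      cases hi : ι i <;> simp [hi]
    · simp [coord]

theorem isSigmaDef_one_iff [Model M] {k : ℕ} {R : (Fin k → M) → Prop} :
    IsSigmaDef 1 M R ↔ Sigma1 R := by
  constructor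
  · rintro ⟨p, φ, w, hφ, hR⟩
    have hmap : TermMap fun v : Fin k → M => (Sum.elim v w, (finZeroElim : Fin 0 → M)) :=
      ⟨Sum.rec (Sum.rec (.coord (Γ := Fin k → M)) fun j => .const (w j)) finZeroElim⟩
    exact (hφ.sigma1_realize.comp_termMap fun v => (Sum.elim v w, finZeroElim)).congr hR
  · rintro ⟨Q, hQ, hRQ⟩
    obtain ⟨L, hL⟩ := (hQ.eventually_exists_formula (α := Fin k)).exists
    obtain ⟨φ, hφ, hφQ⟩ := hL (n := 1) (Sum.map id fun _ => 0)
    refine ⟨_, φ.ex, params L, .ex 0 0 (.delta0 1 1 hφ), fun v => ?_⟩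
    rw [hRQ, BoundedFormula.realize_ex]
    refine exists_congr fun z => (hφQ v _ (v, z) ?_).symm
    rintro (i | _) <;> rfl

end Formulas

section SigmaOne

variable {M : Type} [lang.Structure M] {Γ Δ Θ : Type} [Context M Γ] [Context M Δ] [Context M Θ]

/-- The maps of contexts along which Σ₁ predicates, possibly with further variables, pull back to
Σ₁ predicates. A function to `M` is of this kind as soon as its graph is Σ₁. -/
class Sigma1Map (r : Γ → Δ) : Prop where
  comp_prodMap_id : ∀ {Θ : Type} [Context M Θ] {P : Δ × Θ → Prop}, Sigma1 P →
    Sigma1 fun p : Γ × Θ => P (r p.1, p.2)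

theorem Sigma1.comp {P : Δ → Prop} (hP : Sigma1 P) (r : Γ → Δ) [hr : Sigma1Map r] :
    Sigma1 fun γ => P (r γ) :=
  (hr.comp_prodMap_id (hP.comp_termMap fun p : Δ × Γ => p.1)).comp_termMap fun γ => (γ, γ)

namespace Sigma1Map

theorem of_termMap (r : Γ → Δ) [TermMap r] : Sigma1Map r where
  comp_prodMap_id {Θ} _ _ hP :=
    have := TermMap.prodMap_id (Θ := Θ) r
    hP.comp_termMap fun p : Γ × Θ => (r p.1, p.2)

theorem comp (s : Δ → Θ) (r : Γ → Δ) [hs : Sigma1Map s] [hr : Sigma1Map r] :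
    Sigma1Map fun γ => s (r γ) :=
  ⟨fun hP => hr.comp_prodMap_id (hs.comp_prodMap_id hP)⟩

instance (priority := low) prodMk (r : Γ → Δ) (s : Γ → Θ) [hr : Sigma1Map r] [hs : Sigma1Map s] :
    Sigma1Map fun γ => (r γ, s γ) := by
  refine ⟨fun {Ξ} _ P hP => ?_⟩
  have h₁ := hr.comp_prodMap_id (hP.comp_termMap fun p : Δ × (Θ × Ξ) => ((p.1, p.2.1), p.2.2))
  have h₂ := hs.comp_prodMap_id (h₁.comp_termMap fun p : Θ × (Γ × Ξ) => (p.2.1, (p.1, p.2.2)))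
  exact h₂.comp_termMap fun p : Γ × Ξ => (p.1, p)

instance const (δ : Δ) : Sigma1Map fun _ : Γ => δ := of_termMap _

instance fst (r : Γ → Δ × Θ) [Sigma1Map r] : Sigma1Map fun γ => (r γ).1 :=
  have : Sigma1Map fun p : Δ × Θ => p.1 := of_termMap _
  comp (fun p : Δ × Θ => p.1) r

instance snd (r : Γ → Δ × Θ) [Sigma1Map r] : Sigma1Map fun γ => (r γ).2 :=
  have : Sigma1Map fun p : Δ × Θ => p.2 := of_termMap _
  comp (fun p : Δ × Θ => p.2) r

instance id : Sigma1Map fun γ : Γ => γ := of_termMap _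

theorem of_isTerm {t : Γ → M} (ht : IsTerm t) : Sigma1Map t :=
  have : TermMap t := ⟨fun _ => ht⟩
  of_termMap t

variable (f g : Γ → M) [Sigma1Map f] [Sigma1Map g]

instance add : Sigma1Map fun γ => f γ + g γ :=
  have : Sigma1Map fun p : M × M => p.1 + p.2 :=
    of_isTerm (.add (TermMap.isTerm fun p : M × M => p.1) (TermMap.isTerm _))
  comp (fun p : M × M => p.1 + p.2) fun γ => (f γ, g γ)

instance mul : Sigma1Map fun γ => f γ * g γ :=
  have : Sigma1Map fun p : M × M => p.1 * p.2 :=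
    of_isTerm (.mul (TermMap.isTerm fun p : M × M => p.1) (TermMap.isTerm _))
  comp (fun p : M × M => p.1 * p.2) fun γ => (f γ, g γ)

theorem of_graph [Model M] {f : Γ → M} (hf : Sigma1 fun p : Γ × M => f p.1 = p.2) :
    Sigma1Map f := by
  refine ⟨fun {Θ} _ P hP => ?_⟩
  have h : Sigma1 fun p : Γ × Θ => ∃ y, f p.1 = y ∧ P (y, p.2) :=
    .ex (hP := .and (hP := hf.comp_termMap fun p : (Γ × Θ) × M => (p.1.1, p.2))
      (hQ := hP.comp_termMap fun p : (Γ × Θ) × M => (p.2, p.1.2)))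
  exact h.congr fun p => by simp only [exists_eq_left']

end Sigma1Map

theorem Sigma1.comp₂ {R : M → M → Prop} (hR : Sigma1 fun p : M × M => R p.1 p.2) {Γ : Type}
    [Context M Γ] (f g : Γ → M) [Sigma1Map f] [Sigma1Map g] : Sigma1 fun γ => R (f γ) (g γ) :=
  hR.comp fun γ => (f γ, g γ)

/-- The predicates on contexts that are Σ₁ together with their complement. -/
class Delta1 (P : Γ → Prop) : Prop where
  sigma1 : Sigma1 P
  sigma1_not : Sigma1 fun γ => ¬P γ

attribute [instance] Delta1.sigma1 Delta1.sigma1_not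

theorem Delta0.delta1 {P : Γ → Prop} (hP : Delta0 P) : Delta1 P := ⟨hP.sigma1, hP.not.sigma1⟩

theorem Delta1.comp {P : Δ → Prop} (hP : Delta1 P) (r : Γ → Δ) [Sigma1Map r] :
    Delta1 fun γ => P (r γ) :=
  ⟨hP.sigma1.comp r, hP.sigma1_not.comp r⟩

variable [Model M]

theorem Sigma1.induction {P : M → Prop} (hP : Sigma1 P) (zero : P 0)
    (succ : ∀ x, P x → P (x + 1)) (x : M) : P x := by
  have : TermMap fun v : Fin 1 → M => v 0 := ⟨fun _ => .coord (Γ := Fin 1 → M) (0 : Fin 1)⟩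
  have hdef := isSigmaDef_one_iff.2 (hP.comp_termMap fun v : Fin 1 → M => v 0)
  exact Model.isig {x | P x} hdef zero succ x

theorem SigmaDef2.sigma1 {R : M → M → Prop} (hR : SigmaDef2 1 M R) :
    Sigma1 fun p : M × M => R p.1 p.2 := by
  have : TermMap fun p : M × M => ![p.1, p.2] :=
    ⟨Fin.forall_fin_two.2 ⟨TermMap.isTerm fun p : M × M => p.1,
      TermMap.isTerm fun p : M × M => p.2⟩⟩
  exact (isSigmaDef_one_iff.1 hR).comp_termMap fun p : M × M => ![p.1, p.2]

theorem Delta0.exists_bound {Q : M × M → Prop} (hQ : Delta0 Q) {n : M}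
    (h : ∀ i < n, ∃ w, Q (i, w)) : ∃ b, ∀ i < n, ∃ w < b, Q (i, w) := by
  have hsig : Sigma1 fun m : M => ∃ b, ∀ i, i < m → i < n → ∃ w, w < b ∧ Q (i, w) := by
    refine Sigma1.ex (hP := Delta0.sigma1 (.forall_lt (.imp ?_ (.exists_lt ?_))))
    · exact .lt (TermMap.isTerm fun p : (M × M) × M => p.2) (.const n)
    · exact hQ.comp fun p : ((M × M) × M) × M => (p.1.2, p.2)
  obtain ⟨b, hb⟩ : ∃ b, ∀ i, i < n → i < n → ∃ w, w < b ∧ Q (i, w) := by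
    refine hsig.induction ⟨0, fun i hi => absurd hi (by simp)⟩ (fun m ⟨b, hb⟩ => ?_) n
    rcases lt_or_ge m n with hm | hm
    · obtain ⟨w, hw⟩ := h m hm
      refine ⟨max b (w + 1), fun i hi hin => ?_⟩
      rcases (lt_add_one_iff_le.1 hi).lt_or_eq with hi | rfl
      · obtain ⟨w, hw, hQw⟩ := hb i hi hin
        exact ⟨w, lt_max_of_lt_left hw, hQw⟩
      · exact ⟨w, lt_max_of_lt_right (lt_add_one w), hw⟩
    · exact ⟨b, fun i _ hin => hb i (hin.trans_le hm) hin⟩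
  exact ⟨b, fun i hi => hb i hi hi⟩

theorem Sigma1.forall_lt {P : Γ → M → Prop} (hP : Sigma1 fun p : Γ × M => P p.1 p.2) :
    Sigma1 fun p : Γ × M => ∀ z, z < p.2 → P p.1 z := by
  obtain ⟨Q, hQ, hPQ⟩ := hP
  have hQ' : Delta0 fun p : (((Γ × M) × M) × M) × M => Q ((p.1.1.1.1, p.1.2), p.2) :=
    hQ.comp fun p : (((Γ × M) × M) × M) × M => ((p.1.1.1.1, p.1.2), p.2)
  have h : Sigma1 fun p : Γ × M => ∃ b, ∀ z, z < p.2 → ∃ w, w < b ∧ Q ((p.1, z), w) :=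
    Sigma1.ex (hP := Delta0.sigma1 (.forall_lt (.exists_lt hQ')))
  refine h.congr fun p => ⟨fun hp => ?_, fun ⟨b, hb⟩ z hz => ?_⟩
  · exact (hQ.comp fun q : M × M => ((p.1, q.1), q.2)).exists_bound fun z hz =>
      (hPQ (p.1, z)).1 (hp z hz)
  · exact (hPQ _).2 ((hb z hz).imp fun w hw => hw.2)

instance Sigma1.ball (t : Γ → M) [Sigma1Map t] {P : Γ → M → Prop}
    [hP : Sigma1 fun p : Γ × M => P p.1 p.2] : Sigma1 fun γ => ∀ z, z < t γ → P γ z :=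
  hP.forall_lt.comp fun γ => (γ, t γ)

namespace Delta1

instance eq (f g : Γ → M) [Sigma1Map f] [Sigma1Map g] : Delta1 fun γ => f γ = g γ :=
  have h : Delta0 fun p : M × M => p.1 = p.2 := .eq (TermMap.isTerm _) (TermMap.isTerm _)
  h.delta1.comp fun γ => (f γ, g γ)

instance lt (f g : Γ → M) [Sigma1Map f] [Sigma1Map g] : Delta1 fun γ => f γ < g γ :=
  have h : Delta0 fun p : M × M => p.1 < p.2 := .lt (TermMap.isTerm _) (TermMap.isTerm _)
  h.delta1.comp fun γ => (f γ, g γ)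

variable (P Q : Γ → Prop) [Delta1 P] [Delta1 Q]

instance not : Delta1 fun γ => ¬P γ := ⟨inferInstance, by simp only [not_not]; infer_instance⟩

instance and : Delta1 fun γ => P γ ∧ Q γ :=
  ⟨inferInstance, by simp only [not_and_or]; infer_instance⟩

instance or : Delta1 fun γ => P γ ∨ Q γ :=
  ⟨inferInstance, by simp only [not_or]; infer_instance⟩

instance imp : Delta1 fun γ => P γ → Q γ := by simp only [imp_iff_not_or]; infer_instance

instance le (f g : Γ → M) [Sigma1Map f] [Sigma1Map g] : Delta1 fun γ => f γ ≤ g γ := by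
  simp only [le_iff_lt_or_eq]; infer_instance

theorem exists_lt {P : Γ → M → Prop} (hP : Delta1 fun p : Γ × M => P p.1 p.2) :
    Delta1 fun p : Γ × M => ∃ z, z < p.2 ∧ P p.1 z := by
  have := hP.comp fun p : (Γ × M) × M => (p.1.1, p.2)
  exact ⟨inferInstance, by simp only [not_exists, not_and]; infer_instance⟩

instance bex (t : Γ → M) [Sigma1Map t] {P : Γ → M → Prop}
    [hP : Delta1 fun p : Γ × M => P p.1 p.2] : Delta1 fun γ => ∃ z, z < t γ ∧ P γ z :=
  hP.exists_lt.comp fun γ => (γ, t γ)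

instance ball (t : Γ → M) [Sigma1Map t] {P : Γ → M → Prop}
    [hP : Delta1 fun p : Γ × M => P p.1 p.2] : Delta1 fun γ => ∀ z, z < t γ → P γ z := by
  have : Delta1 fun γ => ¬∃ z, z < t γ ∧ ¬P γ z := inferInstance
  simpa only [not_exists, not_and, not_not] using this

end Delta1

instance Sigma1.imp (P Q : Γ → Prop) [Delta1 P] [Sigma1 Q] : Sigma1 fun γ => P γ → Q γ := by
  simp only [imp_iff_not_or]; infer_instance

end SigmaOne

-- Definability is inferred along the syntax of a predicate, so long formulas exceed the default.
set_option synthInstance.maxSize 1000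

section Division

variable {M : Type} [lang.Structure M] [Model M]

theorem eq_zero_or_eq_add_one (x : M) : x = 0 ∨ ∃ y, x = y + 1 := by
  refine (eq_or_ne x 0).imp_right fun hx => ?_
  obtain ⟨y, rfl⟩ := exists_add_of_le (Model.pam.discrete x (pos_iff_ne_zero.2 hx))
  exact ⟨y, add_comm _ _⟩

theorem add_one_le_iff_lt {x y : M} : x + 1 ≤ y ↔ x < y := by
  rw [← lt_add_one_iff_le, add_lt_add_iff_right]

theorem exists_eq_mul_add_of_pos {m : M} (hm : 0 < m) (a : M) :
    ∃ q r, r < m ∧ a = q * m + r := by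
  refine Sigma1.induction (P := fun a => ∃ q r, r < m ∧ a = q * m + r) inferInstance
    ⟨0, 0, hm, by simp⟩ ?_ a
  rintro a ⟨q, r, hr, rfl⟩
  rcases (add_one_le_iff_lt.2 hr).lt_or_eq with h | h
  · exact ⟨q, r + 1, h, by ring⟩
  · exact ⟨q + 1, 0, hm, by rw [← h]; ring⟩

theorem quotient_le_of_mul_add_eq {m q r q' r' : M} (hr : r < m)
    (h : q * m + r = q' * m + r') : q' ≤ q := by
  by_contra! hq
  obtain ⟨c, rfl⟩ := exists_add_of_le (add_one_le_iff_lt.2 hq)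
  have hr' : r = m + (c * m + r') := add_left_cancel (a := q * m) (by rw [h]; ring)
  exact hr.not_ge (hr' ▸ le_self_add)

theorem remainder_unique {m q r q' r' : M} (hr : r < m) (hr' : r' < m)
    (h : q * m + r = q' * m + r') : r = r' := by
  obtain rfl := (quotient_le_of_mul_add_eq hr' h.symm).antisymm (quotient_le_of_mul_add_eq hr h)
  exact add_left_cancel h

theorem exists_forall_dvd (n : M) {f : M → M} (hf : Sigma1Map f) (hpos : ∀ i < n, 0 < f i) :
    ∃ b, 0 < b ∧ ∀ i, i < n → ∃ c, b = f i * c := by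
  have (Γ : Type) [Context M Γ] (g : Γ → M) [Sigma1Map g] := Sigma1Map.comp f g
  have hsig : Sigma1 fun u => u ≤ n → ∃ b, 0 < b ∧ ∀ i, i < u → ∃ c, b = f i * c := inferInstance
  refine hsig.induction (fun _ => ⟨1, zero_lt_one, by simp⟩) (fun u ih hu => ?_) n le_rfl
  rw [add_one_le_iff_lt] at hu
  obtain ⟨b, hb₀, hb⟩ := ih hu.le
  refine ⟨b * f u, mul_pos hb₀ (hpos u hu), fun i hi => ?_⟩
  rcases (lt_add_one_iff_le.1 hi).lt_or_eq with hi | rfl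
  · obtain ⟨c, rfl⟩ := hb i hi
    exact ⟨c * f u, by ring⟩
  · exact ⟨b, by ring⟩

/-- `a` has an inverse modulo `b`. -/
def IsUnitMod (a b : M) : Prop := ∃ s t, s * a = t * b + 1

theorem IsUnitMod.symm {a b : M} (h : IsUnitMod a b) (ha : 1 ≤ a) (hb : 1 ≤ b) :
    IsUnitMod b a := by
  obtain ⟨s, t, h⟩ := h
  have ht : t ≤ a * (s + t) := le_add_self.trans (le_mul_of_one_le_left' ha)
  have hs : s ≤ b * (s + t) := le_self_add.trans (le_mul_of_one_le_left' hb)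
  obtain ⟨u, hu⟩ := exists_add_of_le ht
  obtain ⟨v, hv⟩ := exists_add_of_le hs
  exact ⟨u, v, by grind⟩

theorem IsUnitMod.mul_left {a a' b : M} (h : IsUnitMod a b) (h' : IsUnitMod a' b) :
    IsUnitMod (a * a') b := by
  obtain ⟨s, t, h⟩ := h
  obtain ⟨s', t', h'⟩ := h'
  exact ⟨s * s', t * t' * b + t + t', by grind⟩

theorem IsUnitMod.exists_add_mul_eq {L m : M} (h : IsUnitMod L (m + 1)) (a x : M) :
    ∃ c q, a + L * c = q * (m + 1) + x := by
  obtain ⟨s, t, h⟩ := h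
  exact ⟨s * (x + a * m), a + t * (x + a * m), by grind⟩

theorem isUnitMod_betaModulus_of_lt {n b i j : M} (hb : ∀ d, d < n → ∃ c, b = (d + 1) * c)
    (hij : i < j) (hj : j < n) : IsUnitMod ((j + 1) * b + 1) ((i + 1) * b + 1) := by
  obtain ⟨d, rfl⟩ := exists_add_of_le (add_one_le_iff_lt.2 hij)
  obtain ⟨c, hc⟩ := hb d (le_add_self.trans_lt hj)
  exact ⟨1 + (i + d + 1 + 1) * (i + 1) * c, (i + d + 1 + 1) * (i + d + 1 + 1) * c, by rw [hc]; ring⟩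

theorem isUnitMod_betaModulus {n b i j : M} (hb : ∀ d, d < n → ∃ c, b = (d + 1) * c)
    (hij : i ≠ j) (hi : i < n) (hj : j < n) : IsUnitMod ((j + 1) * b + 1) ((i + 1) * b + 1) := by
  rcases hij.lt_or_gt with h | h
  · exact isUnitMod_betaModulus_of_lt hb h hj
  · exact (isUnitMod_betaModulus_of_lt hb h hi).symm le_add_self le_add_self

end Division

section Coding

variable {M : Type} [lang.Structure M] [Model M]

theorem chinese_remainder {n b : M} (hb : ∀ d, d < n → ∃ c, b = (d + 1) * c)
    {R : M → M → Prop} (hR : Sigma1 fun p : M × M => R p.1 p.2) (h : ∀ i < n, ∃ x, R i x) :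
    ∃ a, ∀ i, i < n → ∃ x, R i x ∧ ∃ q, a = q * ((i + 1) * b + 1) + x := by
  have (Γ : Type) [Context M Γ] (f g : Γ → M) [Sigma1Map f] [Sigma1Map g] := hR.comp₂ f g
  suffices ∀ u, u ≤ n → ∃ a L,
      (∀ i, i < u → ∃ l, L = ((i + 1) * b + 1) * l) ∧
      (∀ i, i < u → ∃ x, R i x ∧ ∃ q, a = q * ((i + 1) * b + 1) + x) ∧
      ∀ j, j < n → u ≤ j → ∃ s t, s * L = t * ((j + 1) * b + 1) + 1 from
    let ⟨a, _, _, ha, _⟩ := this n le_rfl; ⟨a, ha⟩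
  refine Sigma1.induction inferInstance
    (fun _ => ⟨0, 1, by simp, by simp, fun _ _ _ => ⟨1, 0, by simp⟩⟩) fun u ih hu => ?_
  rw [add_one_le_iff_lt] at hu
  obtain ⟨a, L, hL, ha, hunit⟩ := ih hu.le
  obtain ⟨x, hx⟩ := h u hu
  obtain ⟨c, q, hc⟩ := IsUnitMod.exists_add_mul_eq (hunit u hu le_rfl) a x
  refine ⟨a + L * c, L * ((u + 1) * b + 1), fun i hi => ?_, fun i hi => ?_, fun j hj huj => ?_⟩
  · rcases (lt_add_one_iff_le.1 hi).lt_or_eq with hi | rfl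
    · obtain ⟨l, rfl⟩ := hL i hi
      exact ⟨l * ((u + 1) * b + 1), by ring⟩
    · exact ⟨L, by ring⟩
  · rcases (lt_add_one_iff_le.1 hi).lt_or_eq with hi | rfl
    · obtain ⟨l, rfl⟩ := hL i hi
      obtain ⟨x, hx, q, rfl⟩ := ha i hi
      exact ⟨x, hx, q + l * c, by ring⟩
    · exact ⟨x, hx, q, hc⟩
  · rw [add_one_le_iff_lt] at huj
    exact IsUnitMod.mul_left (hunit j hj huj.le) (isUnitMod_betaModulus hb huj.ne' hj hu)

theorem le_of_add_self_le {x y : M} (h : x + x ≤ y + y) : x ≤ y := by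
  by_contra! hxy
  exact (add_lt_add hxy hxy).not_ge h

namespace IsPairC

theorem add_le {z x y x' y' : M} (h : IsPairC z x y) (h' : IsPairC z x' y') :
    x' + y' ≤ x + y := by
  by_contra! hc
  obtain ⟨c, hc⟩ := exists_add_of_le (add_one_le_iff_lt.2 hc)
  rw [IsPairC] at h h'
  have key : y + y = y + y + (x + x + 2 + (2 * (x + y) * c + 3 * c + c * c + (y' + y'))) := by
    apply add_left_cancel (a := (x + y) * (x + y + 1))
    rw [← h, h', hc]; ring
  exact (lt_add_of_pos_right (y + y) (by positivity)).ne key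

theorem unique {z x y x' y' : M} (h : IsPairC z x y) (h' : IsPairC z x' y') :
    x = x' ∧ y = y' := by
  have hadd : x + y = x' + y' := (h'.add_le h).antisymm (h.add_le h')
  rw [IsPairC, hadd, h', add_right_inj] at h
  obtain rfl : y = y' := (le_of_add_self_le h.ge).antisymm (le_of_add_self_le h.le)
  exact ⟨add_right_cancel hadd, rfl⟩

theorem exists_code (x y : M) : ∃ z, IsPairC z x y := by
  obtain ⟨w, hw⟩ : ∃ w, w + w = (x + y) * (x + y + 1) := by
    refine Sigma1.induction (P := fun n => ∃ w, w + w = n * (n + 1)) inferInstance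
      ⟨0, by simp⟩ ?_ (x + y)
    rintro n ⟨w, hw⟩
    exact ⟨w + (n + 1), by grind⟩
  exact ⟨w + y, by rw [IsPairC, ← hw]; ring⟩

theorem exists_decode (z : M) : ∃ x y, IsPairC z x y := by
  refine Sigma1.induction (P := fun z => ∃ x y, z + z = (x + y) * (x + y + 1) + (y + y))
    inferInstance ⟨0, 0, by simp⟩ ?_ z
  rintro z ⟨x, y, h⟩
  rcases eq_zero_or_eq_add_one x with rfl | ⟨x, rfl⟩
  · exact ⟨y + 1, 0, by grind⟩
  · exact ⟨x, y + 1, by grind⟩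

theorem mono_left {z x y z' x' : M} (h : IsPairC z x y) (h' : IsPairC z' x' y) (hx : x ≤ x') :
    z ≤ z' := by
  apply le_of_add_self_le
  rw [h, h']
  gcongr

instance delta1 {Γ : Type} [Context M Γ] (f g h : Γ → M) [Sigma1Map f] [Sigma1Map g]
    [Sigma1Map h] : Delta1 fun γ => IsPairC (f γ) (g γ) (h γ) := by
  unfold IsPairC; infer_instance

end IsPairC

theorem SeqAt.unique {s i x x' : M} (h : SeqAt s i x) (h' : SeqAt s i x') : x = x' := by
  obtain ⟨a, b, hs, hx, q, hq⟩ := h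
  obtain ⟨a', b', hs', hx', q', hq'⟩ := h'
  obtain ⟨rfl, rfl⟩ := hs.unique hs'
  exact remainder_unique hx hx' (hq.symm.trans hq')

theorem exists_seqAt (s i : M) : ∃ x, SeqAt s i x := by
  obtain ⟨a, b, hs⟩ := IsPairC.exists_decode s
  obtain ⟨q, x, hx, ha⟩ := exists_eq_mul_add_of_pos (m := (i + 1) * b + 1) (by positivity) a
  exact ⟨x, a, b, hs, hx, q, ha⟩

/-- The value at place `i` of the sequence coded by `s`. -/
noncomputable def val (s i : M) : M := (exists_seqAt s i).choose

theorem seqAt_iff {s i x : M} : SeqAt s i x ↔ val s i = x :=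
  ⟨(exists_seqAt s i).choose_spec.unique, fun h => h ▸ (exists_seqAt s i).choose_spec⟩

instance {Γ : Type} [Context M Γ] (f g : Γ → M) [Sigma1Map f] [Sigma1Map g] :
    Sigma1Map fun γ => val (f γ) (g γ) :=
  have : Sigma1Map fun p : M × M => val p.1 p.2 := .of_graph <| by
    simp only [← seqAt_iff, SeqAt, BetaC]; infer_instance
  Sigma1Map.comp (fun p : M × M => val p.1 p.2) fun γ => (f γ, g γ)

/-- All sequences of length `n` with values below `m` have codes below `W`. The right-hand side
makes this a Σ₁ relation: the Chinese remainder theorem allows `β`-codes `⟨a, b⟩` with a fixed `b`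
and `a < L`. -/
def SeqBound (n m W : M) : Prop :=
  ∃ b L Z, m ≤ b ∧ (∀ d, d < n → ∃ c, b = (d + 1) * c) ∧ 0 < L ∧
    (∀ i, i < n → ∃ l, L = ((i + 1) * b + 1) * l) ∧ IsPairC Z L b ∧ W = Z + 1

theorem exists_seqBound (n m : M) : ∃ W, SeqBound n m W := by
  obtain ⟨b, hb₀, hb⟩ := exists_forall_dvd n (f := fun i => i + 1) (by infer_instance)
    fun i _ => by positivity
  obtain ⟨L, hL₀, hL⟩ := exists_forall_dvd n (f := fun i => (i + 1) * (b * m) + 1)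
    (by infer_instance) fun i _ => by positivity
  obtain ⟨Z, hZ⟩ := IsPairC.exists_code L (b * m)
  refine ⟨Z + 1, b * m, L, Z, ?_, fun d hd => ?_, hL₀, hL, hZ, rfl⟩
  · exact le_mul_of_one_le_left' (Model.pam.discrete b hb₀)
  · obtain ⟨c, rfl⟩ := hb d hd
    exact ⟨c * m, by ring⟩

namespace SeqBound

instance sigma1 {Γ : Type} [Context M Γ] (f g h : Γ → M) [Sigma1Map f] [Sigma1Map g]
    [Sigma1Map h] : Sigma1 fun γ => SeqBound (f γ) (g γ) (h γ) := by
  have : Sigma1 fun p : M × M × M => SeqBound p.1 p.2.1 p.2.2 := by unfold SeqBound; infer_instance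
  exact this.comp fun γ => (f γ, g γ, h γ)

theorem exists_val {n m W : M} (hW : SeqBound n m W) {R : M → M → Prop}
    (hR : Sigma1 fun p : M × M => R p.1 p.2) (h : ∀ i < n, ∃ x < m, R i x) :
    ∃ s < W, ∀ i < n, val s i < m ∧ R i (val s i) := by
  have (Γ : Type) [Context M Γ] (f g : Γ → M) [Sigma1Map f] [Sigma1Map g] := hR.comp₂ f g
  obtain ⟨b, L, Z, hmb, hb, hL₀, hL, hZ, rfl⟩ := hW
  obtain ⟨a, ha⟩ := chinese_remainder hb (R := fun i x => x < m ∧ R i x) inferInstance h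
  obtain ⟨Q, r, hr, rfl⟩ := exists_eq_mul_add_of_pos hL₀ a
  obtain ⟨s, hs⟩ := IsPairC.exists_code r b
  refine ⟨s, lt_add_one_iff_le.2 (hs.mono_left hZ hr.le), fun i hi => ?_⟩
  obtain ⟨x, ⟨hxm, hx⟩, q, hq⟩ := ha i hi
  obtain ⟨l, rfl⟩ := hL i hi
  obtain ⟨q', r', hr', rfl⟩ :=
    exists_eq_mul_add_of_pos (m := (i + 1) * b + 1) (by positivity) r
  have hxb : x < (i + 1) * b + 1 := lt_add_one_iff_le.2 <|
    hxm.le.trans (hmb.trans (le_mul_of_one_le_left' le_add_self))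
  obtain rfl : r' = x := remainder_unique (q := Q * l + q') hr' hxb (by rw [← hq]; ring)
  rw [seqAt_iff.1 ⟨_, b, hs, hr', q', rfl⟩]
  exact ⟨hxm, hx⟩

end SeqBound

end Coding

section Sequences

variable {M : Type} [lang.Structure M] [Model M]

theorem exists_forall_val (n : M) {R : M → M → Prop} (hR : Sigma1 fun p : M × M => R p.1 p.2)
    (h : ∀ i < n, ∃ x, R i x) : ∃ s, ∀ i < n, R i (val s i) := by
  have (Γ : Type) [Context M Γ] (f g : Γ → M) [Sigma1Map f] [Sigma1Map g] := hR.comp₂ f g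
  obtain ⟨m, hm⟩ : ∃ m, ∀ i < n, ∃ x < m, R i x := by
    suffices ∀ u, u ≤ n → ∃ m, ∀ i, i < u → ∃ x, x < m ∧ R i x from this n le_rfl
    refine Sigma1.induction inferInstance (fun _ => ⟨0, by simp⟩) fun u ih hu => ?_
    rw [add_one_le_iff_lt] at hu
    obtain ⟨m, hm⟩ := ih hu.le
    obtain ⟨x, hx⟩ := h u hu
    refine ⟨max m (x + 1), fun i hi => ?_⟩
    rcases (lt_add_one_iff_le.1 hi).lt_or_eq with hi | rfl
    · obtain ⟨x, hxm, hx⟩ := hm i hi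
      exact ⟨x, lt_max_of_lt_left hxm, hx⟩
    · exact ⟨x, lt_max_of_lt_right (lt_add_one x), hx⟩
  obtain ⟨W, hW⟩ := exists_seqBound n m
  obtain ⟨s, -, hs⟩ := hW.exists_val hR hm
  exact ⟨s, fun i hi => (hs i hi).2⟩

theorem exists_val_snoc (n a x : M) : ∃ s, (∀ i < n, val s i = val a i) ∧ val s n = x := by
  obtain ⟨s, hs⟩ := exists_forall_val (n + 1)
    (R := fun i y => (i < n → y = val a i) ∧ (i = n → y = x)) inferInstance fun i _ => by
      rcases eq_or_ne i n with rfl | hi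
      · exact ⟨x, by simp⟩
      · exact ⟨val a i, by simp [hi]⟩
  exact ⟨s, fun i hi => (hs i (hi.trans (lt_add_one n))).1 hi, (hs n (lt_add_one n)).2 rfl⟩

theorem exists_val_iterate {R : M → M → M → Prop}
    (hR : Sigma1 fun p : M × M × M => R p.1 p.2.1 p.2.2) (h : ∀ j x, ∃ y, R j x y) (x n : M) :
    ∃ t, val t 0 = x ∧ ∀ j < n, R j (val t j) (val t (j + 1)) := by
  have (Γ : Type) [Context M Γ] (f g h : Γ → M) [Sigma1Map f] [Sigma1Map g] [Sigma1Map h] :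
    Sigma1 fun γ => R (f γ) (g γ) (h γ) := hR.comp fun γ => (f γ, g γ, h γ)
  revert n
  refine Sigma1.induction (P := fun n => ∃ t, val t 0 = x ∧ ∀ j, j < n →
    R j (val t j) (val t (j + 1))) inferInstance ?_ fun n ⟨t, ht₀, ht⟩ => ?_
  · obtain ⟨t, -, ht⟩ := exists_val_snoc 0 0 x
    exact ⟨t, ht, by simp⟩
  · obtain ⟨y, hy⟩ := h n (val t n)
    obtain ⟨s, hs, hsn⟩ := exists_val_snoc (n + 1) t y
    refine ⟨s, (hs 0 (by positivity)).trans ht₀, fun j hj => ?_⟩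
    rw [hs j hj]
    rcases (lt_add_one_iff_le.1 hj).lt_or_eq with hj | rfl
    · rw [hs (j + 1) (by simpa using hj)]
      exact ht j hj
    · rwa [hsn]

/-- The sequence `a` is strictly increasing on its first `n` places. -/
def Increasing (n a : M) : Prop := ∀ j, j < n → ∀ i, i < j → val a i < val a j

/-- The set of the first `n` values of the sequence `a`. -/
def ran (n a : M) : Set M := {x | ∃ i, i < n ∧ val a i = x}

/-- The first `m` values of `b` are strictly increasing and occur among the first `n` values
of `a`. -/
def IsSubseq (m b n a : M) : Prop := Increasing m b ∧ ∀ i, i < m → val b i ∈ ran n a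

variable {Γ : Type} [Context M Γ] (f g h k : Γ → M) [Sigma1Map f] [Sigma1Map g] [Sigma1Map h]
  [Sigma1Map k]

instance : Delta1 fun γ => Increasing (f γ) (g γ) := by
  have : Delta1 fun p : M × M => Increasing p.1 p.2 := by unfold Increasing; infer_instance
  exact this.comp fun γ => (f γ, g γ)

instance : Delta1 fun γ => f γ ∈ ran (g γ) (h γ) := by
  have : Delta1 fun p : M × M × M => ∃ i, i < p.2.1 ∧ val p.2.2 i = p.1 := inferInstance
  exact this.comp fun γ => (f γ, g γ, h γ)

instance : Delta1 fun γ => IsSubseq (f γ) (g γ) (h γ) (k γ) := by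
  have : Delta1 fun p : M × M × M × M => IsSubseq p.1 p.2.1 p.2.2.1 p.2.2.2 := by
    unfold IsSubseq; infer_instance
  exact this.comp fun γ => (f γ, g γ, h γ, k γ)

end Sequences

section Subsequences

variable {M : Type} [lang.Structure M] [Model M] {a b c l m n x : M}

theorem val_mem_ran {i : M} (hi : i < n) : val a i ∈ ran n a := ⟨i, hi, rfl⟩

theorem Increasing.mono (ha : Increasing n a) (hmn : m ≤ n) : Increasing m a :=
  fun j hj => ha j (hj.trans_le hmn)

theorem Increasing.congr (ha : Increasing n a) (h : ∀ i < n, val b i = val a i) :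
    Increasing n b := fun j hj i hij => by
  rw [h j hj, h i (hij.trans hj)]
  exact ha j hj i hij

theorem Increasing.isSubseq (ha : Increasing n a) (hmn : m ≤ n) : IsSubseq m a n a :=
  ⟨ha.mono hmn, fun _ hi => val_mem_ran (hi.trans_le hmn)⟩

theorem IsSubseq.mono (hb : IsSubseq l b n a) (hml : m ≤ l) : IsSubseq m b n a :=
  ⟨hb.1.mono hml, fun i hi => hb.2 i (hi.trans_le hml)⟩

theorem IsSubseq.ran_subset (hb : IsSubseq m b n a) : ran m b ⊆ ran n a := by
  rintro _ ⟨i, hi, rfl⟩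
  exact hb.2 i hi

theorem IsSubseq.trans (hc : IsSubseq l c m b) (hb : IsSubseq m b n a) : IsSubseq l c n a :=
  ⟨hc.1, fun i hi => hb.ran_subset (hc.2 i hi)⟩

theorem ran_succ : ran (n + 1) a = insert (val a n) (ran n a) := by
  ext x
  constructor
  · rintro ⟨i, hi, rfl⟩
    exact (lt_add_one_iff_le.1 hi).eq_or_lt.imp (congrArg _) val_mem_ran
  · rintro (rfl | ⟨i, hi, rfl⟩)
    exacts [val_mem_ran (lt_add_one n), val_mem_ran (hi.trans (lt_add_one n))]

theorem ran_congr (h : ∀ i < n, val b i = val a i) : ran n b = ran n a := by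
  ext x
  exact exists_congr fun i => and_congr_right fun hi => by rw [h i hi]

theorem Increasing.exists_snoc (ha : Increasing n a) (hx : ∀ z ∈ ran n a, z < x) :
    ∃ s, Increasing (n + 1) s ∧ (∀ i < n, val s i = val a i) ∧ val s n = x := by
  obtain ⟨s, hs, hsn⟩ := exists_val_snoc n a x
  refine ⟨s, fun j hj i hij => ?_, hs, hsn⟩
  rcases (lt_add_one_iff_le.1 hj).lt_or_eq with hj | rfl
  · exact ha.congr hs j hj i hij
  · rw [hs i hij, hsn]
    exact hx _ (val_mem_ran hij)

theorem IsSubseq.exists_snoc (hb : IsSubseq m b n a) (ha : Increasing (n + 1) a)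
    {P : M → Prop} (hP : ∀ i < m, P (val b i)) (hPn : P (val a n)) :
    ∃ s, IsSubseq (m + 1) s (n + 1) a ∧ ∀ i < m + 1, P (val s i) := by
  have hlt : ∀ z ∈ ran m b, z < val a n := fun z hz => by
    obtain ⟨i, hi, rfl⟩ := hb.ran_subset hz
    exact ha n (lt_add_one n) i hi
  obtain ⟨s, hs, hsb, hsm⟩ := hb.1.exists_snoc hlt
  have cases_lt {Q : M → Prop} (hQ : ∀ i < m, Q (val b i)) (hQn : Q (val a n)) :
      ∀ i < m + 1, Q (val s i) := fun i hi => by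
    rcases (lt_add_one_iff_le.1 hi).lt_or_eq with hi | rfl
    exacts [(hsb i hi).symm ▸ hQ i hi, hsm.symm ▸ hQn]
  refine ⟨s, ⟨hs, cases_lt (fun i hi => ?_) (val_mem_ran (lt_add_one n))⟩, cases_lt hP hPn⟩
  rw [ran_succ]
  exact .inr (hb.2 i hi)

theorem Increasing.exists_partition (ha : Increasing n a) {P : M → Prop} (hP : Delta1 P) :
    ∃ u v b c, u + v = n ∧ (IsSubseq u b n a ∧ ∀ i, i < u → P (val b i)) ∧
      (IsSubseq v c n a ∧ ∀ i, i < v → ¬P (val c i)) := by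
  have (Γ : Type) [Context M Γ] (f : Γ → M) [Sigma1Map f] : Delta1 fun γ => P (f γ) := hP.comp f
  suffices ∀ l, l ≤ n → ∃ u v b c, u + v = l ∧ (IsSubseq u b l a ∧ ∀ i, i < u → P (val b i)) ∧
      (IsSubseq v c l a ∧ ∀ i, i < v → ¬P (val c i)) from this n le_rfl
  refine Sigma1.induction inferInstance (fun _ => ⟨0, 0, 0, 0, ?_⟩) fun l ih hl => ?_
  · simp [IsSubseq, Increasing]
  obtain ⟨u, v, b, c, rfl, ⟨hb, hbP⟩, hc, hcP⟩ := ih (le_self_add.trans hl)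
  have hl' := (ha.mono hl).isSubseq (lt_add_one (u + v)).le
  by_cases hPl : P (val a (u + v))
  · obtain ⟨s, hs⟩ := hb.exists_snoc (ha.mono hl) hbP hPl
    exact ⟨u + 1, v, s, c, by ring, hs, hc.trans hl', hcP⟩
  · obtain ⟨s, hs⟩ := hc.exists_snoc (ha.mono hl) (P := fun z => ¬P z) hcP hPl
    exact ⟨u, v + 1, b, s, by ring, ⟨hb.trans hl', hbP⟩, hs⟩

theorem Increasing.exists_monochromatic (ha : Increasing n a) {k m : M} {T : M → M → Prop}
    (hT : Delta1 fun p : M × M => T p.1 p.2) (hk : ∀ i < n, ∃ c < k, T (val a i) c)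
    (hn : k * m < n) :
    ∃ c < k, ∃ b, IsSubseq m b n a ∧ ∀ i < m, T (val b i) c := by
  have (Γ : Type) [Context M Γ] (f g : Γ → M) [Sigma1Map f] [Sigma1Map g] :
    Delta1 fun γ => T (f γ) (g γ) := hT.comp fun γ => (f γ, g γ)
  have key : ∀ c, c ≤ k → (∃ d, d < k ∧ ∃ b, IsSubseq m b n a ∧ ∀ i, i < m → T (val b i) d) ∨
      ∃ t b, n ≤ t + c * m ∧ IsSubseq t b n a ∧ ∀ i, i < t → ∀ d, d < c → ¬T (val b i) d := by
    refine Sigma1.induction inferInstance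
      (fun _ => .inr ⟨n, a, by simp, ha.isSubseq le_rfl, by simp⟩) fun c ih hc => ?_
    rw [add_one_le_iff_lt] at hc
    refine (ih hc.le).elim .inl fun ⟨t, b, ht, hb, hbc⟩ => ?_
    obtain ⟨u, v, b₁, b₂, rfl, ⟨hb₁, hT₁⟩, hb₂, hT₂⟩ :=
      hb.1.exists_partition (P := fun z => T z c) inferInstance
    rcases le_total m u with hmu | hum
    · exact .inl ⟨c, hc, b₁, (hb₁.mono hmu).trans hb, fun i hi => hT₁ i (hi.trans_le hmu)⟩
    · refine .inr ⟨v, b₂, ht.trans ?_, hb₂.trans hb, fun i hi d hd => ?_⟩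
      · calc u + v + c * m ≤ m + v + c * m := by gcongr
          _ = v + (c + 1) * m := by ring
      rcases (lt_add_one_iff_le.1 hd).lt_or_eq with hd | rfl
      · obtain ⟨j, hj, hij⟩ := hb₂.2 i hi
        exact hij ▸ hbc j hj d hd
      · exact hT₂ i hi
  refine (key k le_rfl).resolve_right fun ⟨t, b, ht, hb, hbk⟩ => ?_
  rcases eq_zero_or_eq_add_one t with rfl | ⟨t, rfl⟩
  · exact hn.not_ge (by simpa using ht)
  · obtain ⟨j, hj, hij⟩ := hb.2 0 (by positivity)
    obtain ⟨c, hc, hT⟩ := hk j hj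
    exact hbk 0 (by positivity) c hc (hij ▸ hT)

end Subsequences

section Ramsey

variable {M : Type} [lang.Structure M] [Model M]

/-- A size `N` from which the proof of Ramsey's theorem extracts a set of size `n` on which colors
no longer depend on entry `r`. Here `Y` bounds the `r`-tuples from a set of size `n`, `W` bounds
the functions from these to the `k` colors, and `val p m` elements suffice for `m` further steps of
the construction. -/
def StepBound (r k n N : M) : Prop :=
  ∃ Y W p, SeqBound r n Y ∧ SeqBound Y k W ∧ val p 0 = 0 ∧
    (∀ m, m < n → val p (m + 1) = W * val p m + 1 + 1) ∧ N = W * val p n + 1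

theorem exists_stepBound (r k n : M) : ∃ N, StepBound r k n N := by
  obtain ⟨Y, hY⟩ := exists_seqBound r n
  obtain ⟨W, hW⟩ := exists_seqBound Y k
  obtain ⟨p, hp₀, hp⟩ := exists_val_iterate (R := fun _ x y => y = W * x + 1 + 1) inferInstance
    (fun _ _ => ⟨_, rfl⟩) 0 n
  exact ⟨_, Y, W, p, hY, hW, hp₀, hp, rfl⟩

theorem exists_stepBound_tower (e k x : M) :
    ∃ t, val t 0 = x ∧ ∀ r < e, StepBound r k (val t r) (val t (r + 1)) :=
  exists_val_iterate (R := fun r => StepBound r k) (by unfold StepBound; infer_instance)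
    (fun r n => exists_stepBound r k n) x e

/-- On the increasing `e`-tuples with code below `V` and entries in `ran n h`, the color `val F`
depends only on the first `r` entries. -/
def DependsOnFirst (F e V r n h : M) : Prop :=
  ∀ q, q < V → IsSubseq e q n h → ∀ q', q' < V → IsSubseq e q' n h →
    (∀ t, t < r → val q t = val q' t) → val F q = val F q'

/-- Two increasing `e`-tuples from `ran N h` with codes below `V` have the same color if they agree
on the first `r` entries, these lie in `A`, and the entries at place `r` lie in `X`. -/
def DependsOnFirstOver (F e V r N h : M) (A X : Set M) : Prop :=
  ∀ q, q < V → IsSubseq e q N h → ∀ q', q' < V → IsSubseq e q' N h →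
    (∀ t, t < r → val q t = val q' t ∧ val q t ∈ A) → val q r ∈ X → val q' r ∈ X →
    val F q = val F q'

/-- The stage of the Ramsey construction at which `i` elements `a` have been chosen and the `l`
elements `s` are left. -/
def Stage (F e V r N h i a l s : M) : Prop :=
  IsSubseq i a N h ∧ IsSubseq l s N h ∧ (∀ t, t < i → ∀ j, j < l → val a t < val s j) ∧
    DependsOnFirstOver F e V r N h (ran i a) (ran i a ∪ ran l s)

variable {F e V r k n N h Y W : M}

theorem SeqBound.exists_positions (hY : SeqBound r n Y) {a q : M}
    (hq : ∀ t < r, val q t ∈ ran n a) : ∃ u < Y, ∀ t < r, val q t = val a (val u t) := by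
  obtain ⟨u, huY, hu⟩ := hY.exists_val (R := fun t i => val q t = val a i) inferInstance
    fun t ht => (hq t ht).imp fun _ hi => ⟨hi.1, hi.2.symm⟩
  exact ⟨u, huY, fun t ht => (hu t ht).2⟩

theorem DependsOnFirst.exists_type (hF : DependsOnFirst F e V (r + 1) N h)
    (hFk : ∀ q < V, val F q < k) (hk : 0 < k) (hW : SeqBound Y k W) (a z : M) :
    ∃ τ < W, ∀ u < Y, ∀ q < V, IsSubseq e q N h → (∀ t < r, val q t = val a (val u t)) →
      val q r = z → val F q = val τ u := by
  have hcolor : ∀ u < Y, ∃ c < k, ∀ q < V, IsSubseq e q N h →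
      (∀ t < r, val q t = val a (val u t)) → val q r = z → val F q = c := fun u _ => by
    by_cases hex : ∃ q < V, IsSubseq e q N h ∧ (∀ t < r, val q t = val a (val u t)) ∧ val q r = z
    · obtain ⟨q, hqV, hq, hqa, hqz⟩ := hex
      refine ⟨val F q, hFk q hqV, fun q' hq'V hq' hqa' hqz' => ?_⟩
      refine hF q' hq'V hq' q hqV hq fun t ht => ?_
      rcases (lt_add_one_iff_le.1 ht).lt_or_eq with ht | rfl
      exacts [(hqa' t ht).trans (hqa t ht).symm, hqz'.trans hqz.symm]
    · exact ⟨0, hk, fun q hqV hq hqa hqz => absurd ⟨q, hqV, hq, hqa, hqz⟩ hex⟩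
  obtain ⟨τ, hτW, hτ⟩ := hW.exists_val inferInstance hcolor
  exact ⟨τ, hτW, fun u hu => (hτ u hu).2⟩

theorem DependsOnFirst.exists_refinement (hF : DependsOnFirst F e V (r + 1) N h)
    (hFk : ∀ q < V, val F q < k) (hk : 0 < k) (hY : SeqBound r n Y) (hW : SeqBound Y k W)
    {i a l m s : M} (hi : i ≤ n) (hs : Increasing l s) (hl : W * m < l) :
    ∃ s', IsSubseq m s' l s ∧ DependsOnFirstOver F e V r N h (ran i a) (ran m s') := by
  obtain ⟨τ, -, s', hs', hτ⟩ := hs.exists_monochromatic (T := fun z τ => ∀ u < Y, ∀ q < V,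
      IsSubseq e q N h → (∀ t < r, val q t = val a (val u t)) → val q r = z → val F q = val τ u)
    inferInstance (fun j _ => hF.exists_type hFk hk hW a (val s j)) hl
  refine ⟨s', hs', fun q hqV hq q' hq'V hq' hqq' ⟨j, hj, hqj⟩ ⟨j', hj', hqj'⟩ => ?_⟩
  obtain ⟨u, huY, hu⟩ := hY.exists_positions fun t ht =>
    (hqq' t ht).2.imp fun _ h => ⟨h.1.trans_le hi, h.2⟩
  rw [hτ j hj u huY q hqV hq hu hqj.symm,
    hτ j' hj' u huY q' hq'V hq' (fun t ht => (hqq' t ht).1 ▸ hu t ht) hqj'.symm]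

theorem Increasing.mem_ran_of_lt {a x y : M} (ha : Increasing (n + 1) a) (hx : x ∈ ran (n + 1) a)
    (hy : y ∈ ran (n + 1) a) (hxy : x < y) : x ∈ ran n a := by
  rw [ran_succ] at hx
  refine hx.resolve_left fun hxn => ?_
  obtain ⟨i, hi, rfl⟩ := hy
  rcases (lt_add_one_iff_le.1 hi).lt_or_eq with hi | rfl
  · exact hxy.not_gt (hxn ▸ ha n (lt_add_one n) i hi)
  · exact hxy.ne hxn

theorem DependsOnFirstOver.union {i a : M} {S S' : Set M} (hr : r < e) (ha : Increasing (i + 1) a)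
    (h₁ : DependsOnFirstOver F e V r N h (ran i a) (ran i a ∪ S))
    (h₂ : DependsOnFirstOver F e V r N h (ran (i + 1) a) S') (hS : S' ⊆ S) (hai : val a i ∈ S) :
    DependsOnFirstOver F e V r N h (ran (i + 1) a) (ran (i + 1) a ∪ S') := by
  intro q hqV hq q' hq'V hq' hqq' hqr hqr'
  by_cases hnew : val q r ∈ S' ∧ val q' r ∈ S'
  · exact h₂ q hqV hq q' hq'V hq' hqq' hnew.1 hnew.2
  have hsub : ran (i + 1) a ∪ S' ⊆ ran i a ∪ S := by
    rw [ran_succ, Set.insert_union]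
    exact Set.insert_subset (.inr hai) (Set.union_subset_union_right _ hS)
  refine h₁ q hqV hq q' hq'V hq' (fun t ht => ⟨(hqq' t ht).1, ?_⟩) (hsub hqr) (hsub hqr')
  rcases not_and_or.1 hnew with hnew | hnew
  · exact ha.mem_ran_of_lt (hqq' t ht).2 (hqr.resolve_right hnew) (hq.1 r hr t ht)
  · refine ha.mem_ran_of_lt (hqq' t ht).2 (hqr'.resolve_right hnew) ?_
    exact (hqq' t ht).1 ▸ hq'.1 r hr t ht

theorem Increasing.exists_tail {l s : M} (hs : Increasing (l + 1) s) :
    ∃ s', IsSubseq l s' (l + 1) s ∧ ∀ j < l, val s 0 < val s' j := by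
  obtain ⟨s', hs'⟩ := exists_forall_val l (R := fun j x => x = val s (j + 1)) inferInstance
    fun _ _ => ⟨_, rfl⟩
  refine ⟨s', ⟨fun j hj i hij => ?_, fun j hj => ?_⟩, fun j hj => ?_⟩
  · rw [hs' j hj, hs' i (hij.trans hj)]
    exact hs _ (by simpa using hj) _ (by simpa using hij)
  · exact hs' j hj ▸ val_mem_ran (by simpa using hj)
  · exact hs' j hj ▸ hs _ (by simpa using hj) _ (by positivity)

theorem Stage.exists_succ (hF : DependsOnFirst F e V (r + 1) N h) (hFk : ∀ q < V, val F q < k)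
    (hk : 0 < k) (hY : SeqBound r n Y) (hW : SeqBound Y k W) (hr : r < e) {i a m s : M}
    (hi : i < n) (hS : Stage F e V r N h i a (W * m + 1 + 1) s) :
    ∃ a' s', Stage F e V r N h (i + 1) a' m s' := by
  obtain ⟨ha, hs, has, hdep⟩ := hS
  have hs₀ : val s 0 ∈ ran (W * m + 1 + 1) s := val_mem_ran (by positivity)
  obtain ⟨u, hu, hsu⟩ := hs.1.exists_tail
  obtain ⟨a', ha', haa', hai⟩ := ha.1.exists_snoc (x := val s 0) (by
    rintro _ ⟨t, ht, rfl⟩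
    exact has t ht 0 (by positivity))
  obtain ⟨s', hs', hdep'⟩ := hF.exists_refinement hFk hk hY hW (a := a')
    (add_one_le_iff_lt.2 hi) hu.1 (lt_add_one (W * m))
  refine ⟨a', s', ⟨ha', fun t ht => ?_⟩, (hs'.trans hu).trans hs, fun t ht j hj => ?_,
    .union hr ha' (ran_congr haa' ▸ hdep) hdep' (hs'.trans hu).ran_subset (hai ▸ hs₀)⟩
  · rcases (lt_add_one_iff_le.1 ht).lt_or_eq with ht | rfl
    exacts [haa' t ht ▸ ha.2 t ht, hai ▸ hs.ran_subset hs₀]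
  · obtain ⟨j', hj', hjj'⟩ := hs'.2 j hj
    calc val a' t ≤ val a' i := (lt_add_one_iff_le.1 ht).lt_or_eq.elim
          (fun ht => (ha' i (lt_add_one i) t ht).le) fun ht => ht ▸ le_rfl
      _ < val s' j := by rw [hai, ← hjj']; exact hsu j' hj'

theorem Stage.dependsOnFirst {a s : M} (hr : r < e) (hS : Stage F e V r N h n a 0 s) :
    DependsOnFirst F e V r n a := fun q hqV hq q' hq'V hq' hqq' =>
  hS.2.2.2 q hqV (hq.trans hS.1) q' hq'V (hq'.trans hS.1)
    (fun t ht => ⟨hqq' t ht, hq.2 t (ht.trans hr)⟩) (.inl (hq.2 r hr)) (.inl (hq'.2 r hr))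

theorem DependsOnFirst.exists_stage_zero (hF : DependsOnFirst F e V (r + 1) N h)
    (hFk : ∀ q < V, val F q < k) (hk : 0 < k) (hY : SeqBound r n Y) (hW : SeqBound Y k W)
    (hh : Increasing N h) {m : M} (hN : N = W * m + 1) : ∃ s, Stage F e V r N h 0 0 m s := by
  obtain ⟨s, hs, hdep⟩ := hF.exists_refinement hFk hk hY hW (a := 0) (m := m) (by simp : 0 ≤ n) hh
    (hN ▸ lt_add_one _)
  have hran : ran (0 : M) 0 = ∅ := by simp [ran]
  exact ⟨s, ⟨by simp [Increasing], by simp⟩, hs, by simp, by rwa [hran, Set.empty_union, ← hran]⟩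

instance {Γ : Type} [Context M Γ] (i a l s : Γ → M) [Sigma1Map i] [Sigma1Map a] [Sigma1Map l]
    [Sigma1Map s] : Delta1 fun γ => Stage F e V r N h (i γ) (a γ) (l γ) (s γ) := by
  have : Delta1 fun p : M × M × M × M => Stage F e V r N h p.1 p.2.1 p.2.2.1 p.2.2.2 := by
    simp only [Stage, DependsOnFirstOver, Set.mem_union]; infer_instance
  exact this.comp fun γ => (i γ, a γ, l γ, s γ)

theorem DependsOnFirst.exists_isSubseq_of_succ (hF : DependsOnFirst F e V (r + 1) N h)
    (hFk : ∀ q < V, val F q < k) (hk : 0 < k) (hr : r < e) (hN : StepBound r k n N)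
    (hh : Increasing N h) : ∃ a, IsSubseq n a N h ∧ DependsOnFirst F e V r n a := by
  obtain ⟨Y, W, p, hY, hW, hp₀, hp, hN⟩ := hN
  have key : ∀ i, i ≤ n → ∃ m a s, i + m = n ∧ Stage F e V r N h i a (val p m) s := by
    refine Sigma1.induction inferInstance (fun _ => ?_) fun i ih hi => ?_
    · exact ⟨n, 0, (hF.exists_stage_zero hFk hk hY hW hh hN).imp fun _ hs => ⟨zero_add n, hs⟩⟩
    rw [add_one_le_iff_lt] at hi
    obtain ⟨m, a, s, him, hS⟩ := ih hi.le
    rcases eq_zero_or_eq_add_one m with rfl | ⟨m, rfl⟩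
    · exact absurd (by simpa using him) hi.ne
    have hm : m < n := (lt_add_one m).trans_le (him ▸ le_add_self)
    obtain ⟨a', s', hS'⟩ := Stage.exists_succ hF hFk hk hY hW hr hi (hp m hm ▸ hS)
    exact ⟨m, a', s', by rw [← him]; ring, hS'⟩
  obtain ⟨m, a, s, hm, hS⟩ := key n le_rfl
  obtain rfl : m = 0 := by simpa using hm
  exact ⟨a, hS.1, (hp₀ ▸ hS).dependsOnFirst hr⟩

instance {Γ : Type} [Context M Γ] (r n a : Γ → M) [Sigma1Map r] [Sigma1Map n] [Sigma1Map a] :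
    Delta1 fun γ => DependsOnFirst F e V (r γ) (n γ) (a γ) := by
  have : Delta1 fun p : M × M × M => DependsOnFirst F e V p.1 p.2.1 p.2.2 := by
    unfold DependsOnFirst; infer_instance
  exact this.comp fun γ => (r γ, n γ, a γ)

theorem DependsOnFirst.exists_homogeneous {t : M}
    (ht : ∀ r < e, StepBound r k (val t r) (val t (r + 1))) (hFk : ∀ q < V, val F q < k)
    (hk : 0 < k) (hF : DependsOnFirst F e V e (val t e) h) (hh : Increasing (val t e) h) :
    ∃ a, IsSubseq (val t 0) a (val t e) h ∧ DependsOnFirst F e V 0 (val t 0) a := by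
  have key : ∀ i, i ≤ e → ∃ r a, r + i = e ∧ IsSubseq (val t r) a (val t e) h ∧
      DependsOnFirst F e V r (val t r) a := by
    refine Sigma1.induction inferInstance
      (fun _ => ⟨e, h, add_zero e, hh.isSubseq le_rfl, hF⟩) fun i ih hi => ?_
    obtain ⟨r, a, hri, ha, hFa⟩ := ih (le_self_add.trans hi)
    rcases eq_zero_or_eq_add_one r with rfl | ⟨r, rfl⟩
    · exact absurd (by simpa using hri) (add_one_le_iff_lt.1 hi).ne
    have hr : r < e := (lt_add_one r).trans_le (hri ▸ le_self_add)
    obtain ⟨b, hb, hFb⟩ := hFa.exists_isSubseq_of_succ hFk hk hr (ht r hr) ha.1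
    exact ⟨r, b, by rw [← hri]; ring, hb.trans ha, hFb⟩
  obtain ⟨r, a, hr, ha⟩ := key e le_rfl
  obtain rfl : r = 0 := by simpa using hr
  exact ⟨a, ha⟩

end Ramsey

section FiniteSets

variable {M : Type} [lang.Structure M] [Model M]

theorem codesFinset_iff {d m : M} {D : Set M} :
    CodesFinset d D m ↔ ∃ s, IsPairC d m s ∧ Increasing m s ∧ D = ran m s := by
  refine exists_congr fun s => and_congr_right fun _ => ?_
  simp only [seqAt_iff]
  constructor
  · rintro ⟨-, hinc, hD⟩
    exact ⟨fun j hj i hij => hinc i j _ _ hij hj rfl rfl, Set.ext hD⟩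
  · rintro ⟨hinc, rfl⟩
    exact ⟨fun i hi => ⟨_, val_mem_ran hi, rfl⟩,
      fun i j _ _ hij hj hi hj' => hi ▸ hj' ▸ hinc j hj i hij, fun x => Iff.rfl⟩

theorem Increasing.exists_codesFinset {m s : M} (hs : Increasing m s) :
    ∃ d, IsPairC d m s ∧ CodesFinset d (ran m s) m :=
  (IsPairC.exists_code m s).imp fun _ hd => ⟨hd, codesFinset_iff.2 ⟨s, hd, hs, rfl⟩⟩

theorem exists_increasing_forall_ran_lt (y : M) : ∃ h, Increasing y h ∧ ∀ z ∈ ran y h, z < y := by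
  obtain ⟨h, hh⟩ := exists_forall_val y (R := fun i x => x = i) inferInstance fun i _ => ⟨i, rfl⟩
  refine ⟨h, fun j hj i hij => ?_, ?_⟩
  · rwa [hh j hj, hh i (hij.trans hj)]
  · rintro _ ⟨i, hi, rfl⟩
    exact (hh i hi).symm ▸ hi

namespace IsColoring

variable {e y k : M} {C : M → M → Prop}

theorem exists_val (hC : IsColoring M 1 e y k C) (hk : 0 < k) (V : M) :
    ∃ F, ∀ q < V, val F q < k ∧
      (Increasing e q → ∀ d, CodesTupleIn d e y (ran e q) → C d (val F q)) := by
  have (Γ : Type) [Context M Γ] (f g : Γ → M) [Sigma1Map f] [Sigma1Map g] := hC.1.sigma1.comp₂ f g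
  obtain ⟨F, hF⟩ := exists_forall_val V (R := fun q c => c < k ∧ (Increasing e q →
      (∀ i < e, val q i < y) → ∃ d, IsPairC d e q ∧ C d c)) inferInstance fun q _ => by
    by_cases hq : Increasing e q ∧ ∀ i < e, val q i < y
    · obtain ⟨d, hdq, hd⟩ := hq.1.exists_codesFinset
      obtain ⟨c, hc, hdc⟩ := hC.2.1 d _ ⟨hd, by rintro _ ⟨i, hi, rfl⟩; exact hq.2 i hi⟩
      exact ⟨c, hc, fun _ _ => ⟨d, hdq, hdc⟩⟩
    · exact ⟨0, hk, fun hinc hlt => absurd ⟨hinc, hlt⟩ hq⟩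
  refine ⟨F, fun q hqV => ⟨(hF q hqV).1, fun hq d hd => ?_⟩⟩
  obtain ⟨d', hd', hd'q⟩ := (hF q hqV).2 hq fun i hi => hd.2 _ (val_mem_ran hi)
  obtain ⟨c, -, hdc⟩ := hC.2.1 d _ hd
  rwa [← hC.2.2 d d' _ _ _ hd ⟨codesFinset_iff.2 ⟨q, hd', hq, rfl⟩, hd.2⟩ hdc hd'q]

theorem dependsOnFirst (hC : IsColoring M 1 e y k C) {F V h : M}
    (hF : ∀ q < V, Increasing e q → ∀ d, CodesTupleIn d e y (ran e q) → C d (val F q))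
    (hh : ∀ z ∈ ran y h, z < y) : DependsOnFirst F e V e y h := by
  intro q hqV hq q' hq'V hq' hqq'
  obtain ⟨d, -, hd⟩ := hq.1.exists_codesFinset
  have hdy : CodesTupleIn d e y (ran e q) := ⟨hd, fun z hz => hh z (hq.ran_subset hz)⟩
  have hdy' : CodesTupleIn d e y (ran e q') := ran_congr hqq' ▸ hdy
  exact hC.2.2 d d _ _ _ hdy hdy (hF q hqV hq.1 d hdy) (hF q' hq'V hq'.1 d hdy')

end IsColoring

theorem SeqBound.exists_isSubseq_of_codesFinset {e y V n a d : M} {D : Set M}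
    (hV : SeqBound e y V) (hd : CodesFinset d D e) (hD : D ⊆ ran n a) (hDy : ∀ z ∈ D, z < y) :
    ∃ q < V, IsSubseq e q n a ∧ ran e q = D := by
  obtain ⟨s, -, hs, rfl⟩ := codesFinset_iff.1 hd
  obtain ⟨q, hqV, hq⟩ := hV.exists_val (R := fun i x => x = val s i) inferInstance
    fun i hi => ⟨_, hDy _ (val_mem_ran hi), rfl⟩
  have hqs : ∀ i < e, val q i = val s i := fun i hi => (hq i hi).2
  exact ⟨q, hqV, ⟨hs.congr hqs, fun i hi => hqs i hi ▸ hD (val_mem_ran hi)⟩, ran_congr hqs⟩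

theorem DependsOnFirst.exists_color {F e y V n a : M} {C : M → M → Prop} (hV : SeqBound e y V)
    (hF : ∀ q < V, Increasing e q → ∀ d, CodesTupleIn d e y (ran e q) → C d (val F q))
    (hFa : DependsOnFirst F e V 0 n a) (hay : ∀ z ∈ ran n a, z < y) :
    ∃ i, ∀ d D, CodesFinset d D e → D ⊆ ran n a → C d i := by
  obtain ⟨i, hi⟩ : ∃ i, ∀ q < V, IsSubseq e q n a → val F q = i := by
    by_cases hex : ∃ q < V, IsSubseq e q n a
    · obtain ⟨q, hqV, hq⟩ := hex
      exact ⟨val F q, fun q' hq'V hq' => hFa q' hq'V hq' q hqV hq (by simp)⟩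
    · exact ⟨0, fun q hqV hq => absurd ⟨q, hqV, hq⟩ hex⟩
  refine ⟨i, fun d D hd hD => ?_⟩
  have hDy : ∀ z ∈ D, z < y := fun z hz => hay z (hD hz)
  obtain ⟨q, hqV, hq, rfl⟩ := hV.exists_isSubseq_of_codesFinset hd hD hDy
  exact hi q hqV hq ▸ hF q hqV hq.1 d ⟨hd, hDy⟩

end FiniteSets

/-- PA⁻ + IΣ₁ proves FRT^{<ω}(Σ₁): in every model of PA⁻ + IΣ₁,
for all `e ≥ 1`, `k ≥ 1` and `x` there is `y` such that every Σ₁-definable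
`k`-coloring of `[y]^e` has an M-finite homogeneous set of cardinality `x`. -/
theorem statement_2 (M : Type) [lang.Structure M] (hPA : PAm M) (hI : ISig 1 M) :
    ∀ e k : M, (1 : M) ≤ e → (1 : M) ≤ k → FRT M 1 e k := by
  have : Model M := ⟨hPA, hI⟩
  intro e k _ hk x
  have hk₀ : 0 < k := zero_lt_one.trans_le hk
  obtain ⟨t, rfl, ht⟩ := exists_stepBound_tower e k x
  refine ⟨val t e, fun C hC => ?_⟩
  obtain ⟨V, hV⟩ := exists_seqBound e (val t e)
  obtain ⟨F, hF⟩ := hC.exists_val hk₀ V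
  obtain ⟨h, hh, hran⟩ := exists_increasing_forall_ran_lt (val t e)
  have hFC := fun q hq => (hF q hq).2
  obtain ⟨a, ha, hFa⟩ := DependsOnFirst.exists_homogeneous ht (fun q hq => (hF q hq).1) hk₀
    (hC.dependsOnFirst hFC hran) hh
  have hay : ∀ z ∈ ran (val t 0) a, z < val t e := fun z hz => hran z (ha.ran_subset hz)
  obtain ⟨c, -, hc⟩ := ha.1.exists_codesFinset
  exact ⟨c, _, hc, hay, hFa.exists_color hV hFC hay⟩

end ArithFC
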